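/- arXiv:2311.06085 — 11 statements merged into one kernel-verified Lean document; each statement's English description precedes it below -/
import Mathlib

section
/- Let n ∈ ℕ and let Γ be a subgroup of the symmetric group on {1,…,n}, acting on vectors x ∈ {0,1}^n by (γ(x))_i = x_{γ⁻¹(i)}. Let L = (ℓ_1,…,ℓ_k) be a sequence of distinct indices in {1,…,n}; define Γ_1 = Γ, Γ_{i+1} = {γ ∈ Γ_i : γ(ℓ_i) = ℓ_i}, and O_i = {γ(ℓ_i) : γ ∈ Γ_i}. Then for every x ∈ {0,1}^n there exists γ ∈ Γ such that the vector y = γ(x) satisfies all SST cuts, i.e., y_f ≤ y_{ℓ_i} for every i ∈ {1,…,k} and every f ∈ O_i. (This is the key claim proved inside Theorem 3.1: every orbit of binary vectors meets the SST cone.) -/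
/-- The stabilizer chain: `sstChain Γ ℓ 0 = Γ` and
`sstChain Γ ℓ (i+1)` is the pointwise stabilizer of `ℓ i` inside `sstChain Γ ℓ i`. -/
def sstChain {α : Type*} (Γ : Set (Equiv.Perm α)) (ℓ : ℕ → α) : ℕ → Set (Equiv.Perm α)
  | 0 => Γ
  | i + 1 => {γ ∈ sstChain Γ ℓ i | γ (ℓ i) = ℓ i}

/-- The orbit `O_i` of the leader `ℓ i` under the `i`-th group of the stabilizer chain. -/
def sstOrbit {α : Type*} (Γ : Set (Equiv.Perm α)) (ℓ : ℕ → α) (i : ℕ) : Set α :=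
  (fun γ : Equiv.Perm α => γ (ℓ i)) '' sstChain Γ ℓ i

theorem sst_aux_mul {α : Type*} (Γ : Subgroup (Equiv.Perm α)) (ℓ : ℕ → α) (i : ℕ) :
    ∀ a ∈ sstChain (↑Γ : Set (Equiv.Perm α)) ℓ i, ∀ b ∈ sstChain (↑Γ : Set (Equiv.Perm α)) ℓ i,
      a * b ∈ sstChain (↑Γ : Set (Equiv.Perm α)) ℓ i := by
  induction i with
  | zero => exact fun a ha b hb => Γ.mul_mem ha hb
  | succ i ih =>
    rintro a ⟨ha, ha'⟩ b ⟨hb, hb'⟩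
    exact ⟨ih a ha b hb, by rw [Equiv.Perm.mul_apply, hb', ha']⟩

theorem sst_aux_one {α : Type*} (Γ : Subgroup (Equiv.Perm α)) (ℓ : ℕ → α) (i : ℕ) :
    1 ∈ sstChain (↑Γ : Set (Equiv.Perm α)) ℓ i := by
  induction i with
  | zero => exact Γ.one_mem
  | succ i ih => exact ⟨ih, rfl⟩

theorem sst_aux_anti {α : Type*} (Γ : Set (Equiv.Perm α)) (ℓ : ℕ → α) :
    Antitone (sstChain Γ ℓ) :=
  antitone_nat_of_succ_le fun _ _ h => h.1

/-- Every orbit of binary vectors under `Γ` contains a vector satisfying all SST cuts: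
for any `x ∈ {0,1}^n` there is `γ ∈ Γ` such that `y = γ(x)`, given by `y i = x (γ⁻¹ i)`,
satisfies `y f ≤ y (ℓ i)` for every leader `ℓ i` and every `f` in its orbit `O_i`. -/
theorem sst_orbit_meets_cone (n k : ℕ) (Γ : Subgroup (Equiv.Perm (Fin n)))
    (ℓ : ℕ → Fin n) (hdist : ∀ i < k, ∀ j < k, ℓ i = ℓ j → i = j)
    (x : Fin n → ℝ) (hx : ∀ i, x i = 0 ∨ x i = 1) :
    ∃ γ ∈ Γ, ∀ i < k, ∀ f ∈ sstOrbit (↑Γ : Set (Equiv.Perm (Fin n))) ℓ i,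
      x (γ⁻¹ f) ≤ x (γ⁻¹ (ℓ i)) := by
  clear hdist hx
  induction k with
  | zero => exact ⟨1, Γ.one_mem, fun i hi => absurd hi (Nat.not_lt_zero i)⟩
  | succ k ih =>
    obtain ⟨γ, hγ, h⟩ := ih
    obtain ⟨δ, hδ, hmax⟩ := Set.exists_max_image (sstChain (↑Γ : Set (Equiv.Perm (Fin n))) ℓ k)
      (fun δ => x (γ⁻¹ (δ (ℓ k)))) (Set.toFinite _) ⟨1, sst_aux_one Γ ℓ k⟩
    have hδΓ : δ ∈ Γ := sst_aux_anti _ ℓ (Nat.zero_le k) hδ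
    refine ⟨δ⁻¹ * γ, Γ.mul_mem (Γ.inv_mem hδΓ) hγ, ?_⟩
    rintro i hi f ⟨ε, hε, rfl⟩
    simp only [mul_inv_rev, inv_inv, Equiv.Perm.mul_apply]
    rcases Nat.lt_succ_iff_lt_or_eq.mp hi with hi | rfl
    · have hfix : δ (ℓ i) = ℓ i := (sst_aux_anti _ ℓ (Nat.succ_le_of_lt hi) hδ).2
      rw [hfix]
      exact h i hi _ ⟨δ * ε, sst_aux_mul Γ ℓ i _ (sst_aux_anti _ ℓ hi.le hδ) _ hε, rfl⟩
    · exact hmax (δ * ε) (sst_aux_mul Γ ℓ i _ hδ _ hε)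
end

section
/- Let k ∈ ℕ, let X, Y, Z be pairwise disjoint finite sets with |X| = |Y| = |Z| = k, and let 𝒯 = {T_1,…,T_m} ⊆ X × Y × Z be a finite set of triples; for T = (a,b,c) write elem(T) = {a,b,c}. Let B = 𝒯 ⊔ X ⊔ Y ⊔ Z and define w : 𝒯 × B → ℤ by w(T,β) = −2 if β = T, w(T,β) = 1 if β ∈ X ∪ Y ∪ Z and β ∈ elem(T), and w(T,β) = 0 otherwise. Call x : 𝒯 × B → {0,1} feasible if (i) Σ_{T ∈ 𝒯} x(T,β) ≤ 1 for every β ∈ B, and (ii) x(T_i,β) ≤ x(T_i,T_i) whenever β = T_j for some j > i or β ∈ X ∪ Y ∪ Z. Then there exists a feasible x with Σ_{T,β} w(T,β)·x(T,β) ≥ k if and only if there exists 𝒯' ⊆ 𝒯 such that every element of X ∪ Y ∪ Z belongs to exactly one triple of 𝒯' (a 3-dimensional matching). (This is the Claim proved inside Theorem 3.2, giving the reduction from 3D-matching.) -/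
open Finset

/-- The column index set `B = 𝒯 ⊔ X ⊔ Y ⊔ Z`: a column is either a triple index
or an element of `X ∪ Y ∪ Z`. -/
abbrev ColIdx {α : Type*} [DecidableEq α] (m : ℕ) (X Y Z : Finset α) :=
  Fin m ⊕ {a : α // a ∈ X ∪ Y ∪ Z}

/-- The weight function `w` of the reduction: `w(T,β) = -2` if `β = T`,
`w(T,β) = 1` if `β ∈ X ∪ Y ∪ Z` belongs to the triple `T`, and `0` otherwise. -/
def wgt {α : Type*} [DecidableEq α] (m : ℕ) (X Y Z : Finset α)
    (T : Fin m → α × α × α) : Fin m → ColIdx m X Y Z → ℤ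
  | i, Sum.inl j => if j = i then -2 else 0
  | i, Sum.inr a => if a.1 = (T i).1 ∨ a.1 = (T i).2.1 ∨ a.1 = (T i).2.2 then 1 else 0

theorem row_sum_aux {α : Type*} [DecidableEq α] (m : ℕ)
    (X Y Z : Finset α)
    (hXY : Disjoint X Y) (hXZ : Disjoint X Z) (hYZ : Disjoint Y Z)
    (T : Fin m → α × α × α)
    (hT : ∀ i, (T i).1 ∈ X ∧ (T i).2.1 ∈ Y ∧ (T i).2.2 ∈ Z)
    (i : Fin m) (p q r : {a : α // a ∈ X ∪ Y ∪ Z})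
    (hp : p.1 = (T i).1) (hq : q.1 = (T i).2.1) (hr : r.1 = (T i).2.2)
    (x : ColIdx m X Y Z → ℝ) :
    ∑ β, (wgt m X Y Z T i β : ℝ) * x β =
      -2 * x (Sum.inl i) + x (Sum.inr p) + x (Sum.inr q) + x (Sum.inr r) := by
  obtain ⟨h1, h2, h3⟩ := hT i
  have n1 : p ≠ q := fun h => Finset.disjoint_left.1 hXY h1 (by rw [← hp, h, hq]; exact h2)
  have n2 : p ≠ r := fun h => Finset.disjoint_left.1 hXZ h1 (by rw [← hp, h, hr]; exact h3)
  have n3 : q ≠ r := fun h => Finset.disjoint_left.1 hYZ h2 (by rw [← hq, h, hr]; exact h3)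
  rw [Fintype.sum_sum_type]
  have e1 : ∑ j : Fin m, (wgt m X Y Z T i (Sum.inl j) : ℝ) * x (Sum.inl j)
      = -2 * x (Sum.inl i) := by
    rw [Finset.sum_eq_single i]
    · simp [wgt]
    · intro b _ hb; simp [wgt, hb]
    · simp
  have e2 : ∀ a : {a : α // a ∈ X ∪ Y ∪ Z}, (wgt m X Y Z T i (Sum.inr a) : ℝ) * x (Sum.inr a)
      = (if a = p then x (Sum.inr a) else 0) + (if a = q then x (Sum.inr a) else 0)
        + (if a = r then x (Sum.inr a) else 0) := by
    intro a
    simp only [wgt, ← hp, ← hq, ← hr, ← Subtype.ext_iff]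
    by_cases ha : a = p
    · subst ha; simp [n1, n2]
    by_cases hb : a = q
    · subst hb; simp [ha, n3]
    by_cases hc : a = r
    · subst hc; simp [ha, hb]
    simp [ha, hb, hc]
  rw [e1, Finset.sum_congr rfl (fun a _ => e2 a)]
  simp only [Finset.sum_add_distrib, Finset.sum_ite_eq', Finset.sum_ite_eq, Finset.mem_univ, if_true]
  ring

theorem coord_aux {α : Type*} [DecidableEq α] (k m : ℕ) (U W : Finset α) (hW : W.card = k)
    (hWU : W ⊆ U) (f : Fin m → α) (hf : ∀ i, f i ∈ W) (x : Fin m → {a : α // a ∈ U} → ℝ)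
    (h01 : ∀ i a, x i a = 0 ∨ x i a = 1) (hs : ∀ a, ∑ i, x i a ≤ 1)
    (M : Finset (Fin m)) (hM : ∀ i ∈ M, x i ⟨f i, hWU (hf i)⟩ = 1) (hk : k ≤ M.card) :
    ∀ a ∈ W, ∃! i : Fin m, i ∈ M ∧ a = f i := by
  have hinj : ∀ i ∈ M, ∀ j ∈ M, f i = f j → i = j := by
    intro i hi j hj hij
    by_contra hne
    have h1 := hM i hi
    have h2 := hM j hj
    have h3 : (⟨f j, hWU (hf j)⟩ : {a : α // a ∈ U}) = ⟨f i, hWU (hf i)⟩ := Subtype.ext hij.symm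
    rw [h3] at h2
    have h4 := Finset.sum_le_sum_of_subset_of_nonneg (f := fun l => x l ⟨f i, hWU (hf i)⟩)
      (Finset.subset_univ ({i, j} : Finset (Fin m)))
      (fun l _ _ => by rcases h01 l ⟨f i, hWU (hf i)⟩ with h | h <;> simp [h])
    rw [Finset.sum_pair hne, h1, h2] at h4
    linarith [hs ⟨f i, hWU (hf i)⟩]
  have him : M.image f = W := by
    apply Finset.eq_of_subset_of_card_le
    · intro a ha
      obtain ⟨i, _, rfl⟩ := Finset.mem_image.1 ha
      exact hf i
    · rw [Finset.card_image_of_injOn (fun i hi j hj h => hinj i hi j hj h)]; omega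
  intro a ha
  rw [← him] at ha
  obtain ⟨i, hi, rfl⟩ := Finset.mem_image.1 ha
  exact ⟨i, ⟨hi, rfl⟩, fun j hj => (hinj i hi j hj.1 hj.2).symm⟩

/-- The Claim inside Theorem 3.2: there is a feasible binary matrix (satisfying the
column-sum constraints of `P_{m,ℓ}` and the SST cuts) of weight at least `k`
iff the 3D-matching instance admits a 3-dimensional matching. -/
theorem feasible_weight_iff_threeDM {α : Type*} [DecidableEq α] (k m : ℕ)
    (X Y Z : Finset α)
    (hXY : Disjoint X Y) (hXZ : Disjoint X Z) (hYZ : Disjoint Y Z)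
    (hX : X.card = k) (hY : Y.card = k) (hZ : Z.card = k)
    (T : Fin m → α × α × α) (hTinj : Function.Injective T)
    (hT : ∀ i, (T i).1 ∈ X ∧ (T i).2.1 ∈ Y ∧ (T i).2.2 ∈ Z) :
    (∃ x : Fin m → ColIdx m X Y Z → ℝ,
      (∀ i β, x i β = 0 ∨ x i β = 1) ∧
      (∀ β, ∑ i, x i β ≤ 1) ∧
      (∀ i j : Fin m, i < j → x i (Sum.inl j) ≤ x i (Sum.inl i)) ∧
      (∀ (i : Fin m) (a : {a : α // a ∈ X ∪ Y ∪ Z}), x i (Sum.inr a) ≤ x i (Sum.inl i)) ∧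
      (k : ℝ) ≤ ∑ i, ∑ β, (wgt m X Y Z T i β : ℝ) * x i β)
    ↔ ∃ M : Finset (Fin m), ∀ a ∈ X ∪ Y ∪ Z,
        ∃! i : Fin m, i ∈ M ∧ (a = (T i).1 ∨ a = (T i).2.1 ∨ a = (T i).2.2) := by
  have hXU : X ⊆ X ∪ Y ∪ Z := fun a h => by simp [h]
  have hYU : Y ⊆ X ∪ Y ∪ Z := fun a h => by simp [h]
  have hZU : Z ⊆ X ∪ Y ∪ Z := fun a h => by simp [h]
  have hrow := fun (i : Fin m) (x : ColIdx m X Y Z → ℝ) =>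
    row_sum_aux m X Y Z hXY hXZ hYZ T hT i ⟨(T i).1, hXU (hT i).1⟩ ⟨(T i).2.1, hYU (hT i).2.1⟩
      ⟨(T i).2.2, hZU (hT i).2.2⟩ rfl rfl rfl x
  constructor
  · rintro ⟨x, h01, hcol, -, hsst, hk⟩
    simp only [hrow] at hk
    let M : Finset (Fin m) := Finset.univ.filter fun i =>
      x i (Sum.inr ⟨(T i).1, hXU (hT i).1⟩) = 1 ∧ x i (Sum.inr ⟨(T i).2.1, hYU (hT i).2.1⟩) = 1 ∧
      x i (Sum.inr ⟨(T i).2.2, hZU (hT i).2.2⟩) = 1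
    have hMk : k ≤ M.card := by
      have : (k : ℝ) ≤ (M.card : ℝ) := by
        refine hk.trans ?_
        rw [Finset.card_filter]
        push_cast
        apply Finset.sum_le_sum
        intro i _
        have a1 := hsst i ⟨(T i).1, hXU (hT i).1⟩
        have a2 := hsst i ⟨(T i).2.1, hYU (hT i).2.1⟩
        have a3 := hsst i ⟨(T i).2.2, hZU (hT i).2.2⟩
        rcases h01 i (Sum.inl i) with h0 | h0 <;>
        rcases h01 i (Sum.inr ⟨(T i).1, hXU (hT i).1⟩) with h1 | h1 <;>
        rcases h01 i (Sum.inr ⟨(T i).2.1, hYU (hT i).2.1⟩) with h2 | h2 <;>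
        rcases h01 i (Sum.inr ⟨(T i).2.2, hZU (hT i).2.2⟩) with h3 | h3 <;>
        rw [h0, h1] at a1 <;> rw [h0, h2] at a2 <;> rw [h0, h3] at a3 <;>
        rw [h0, h1, h2, h3] <;> first | (exfalso; linarith) | norm_num
      exact_mod_cast this
    have hM : ∀ i ∈ M, _ := fun i hi => (Finset.mem_filter.1 hi).2
    refine ⟨M, ?_⟩
    intro a ha
    have ha' := ha
    simp only [Finset.mem_union] at ha'
    rcases ha' with (h | h) | h
    · have := coord_aux k m (X ∪ Y ∪ Z) X hX hXU (fun i => (T i).1) (fun i => (hT i).1)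
        (fun i a => x i (Sum.inr a)) (fun i a => h01 i _) (fun a => hcol _) M
        (fun i hi => (hM i hi).1) hMk a h
      have e : ∀ i, (a = (T i).1 ∨ a = (T i).2.1 ∨ a = (T i).2.2) ↔ a = (T i).1 := by
        intro i
        have b1 : a ≠ (T i).2.1 := fun e => Finset.disjoint_left.1 hXY h (e ▸ (hT i).2.1)
        have b2 : a ≠ (T i).2.2 := fun e => Finset.disjoint_left.1 hXZ h (e ▸ (hT i).2.2)
        tauto
      simpa only [e] using this
    · have := coord_aux k m (X ∪ Y ∪ Z) Y hY hYU (fun i => (T i).2.1) (fun i => (hT i).2.1)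
        (fun i a => x i (Sum.inr a)) (fun i a => h01 i _) (fun a => hcol _) M
        (fun i hi => (hM i hi).2.1) hMk a h
      have e : ∀ i, (a = (T i).1 ∨ a = (T i).2.1 ∨ a = (T i).2.2) ↔ a = (T i).2.1 := by
        intro i
        have b1 : a ≠ (T i).1 := fun e => Finset.disjoint_left.1 hXY (e ▸ (hT i).1) h
        have b2 : a ≠ (T i).2.2 := fun e => Finset.disjoint_left.1 hYZ h (e ▸ (hT i).2.2)
        tauto
      simpa only [e] using this
    · have := coord_aux k m (X ∪ Y ∪ Z) Z hZ hZU (fun i => (T i).2.2) (fun i => (hT i).2.2)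
        (fun i a => x i (Sum.inr a)) (fun i a => h01 i _) (fun a => hcol _) M
        (fun i hi => (hM i hi).2.2) hMk a h
      have e : ∀ i, (a = (T i).1 ∨ a = (T i).2.1 ∨ a = (T i).2.2) ↔ a = (T i).2.2 := by
        intro i
        have b1 : a ≠ (T i).1 := fun e => Finset.disjoint_left.1 hXZ (e ▸ (hT i).1) h
        have b2 : a ≠ (T i).2.1 := fun e => Finset.disjoint_left.1 hYZ (e ▸ (hT i).2.1) h
        tauto
      simpa only [e] using this
  · rintro ⟨M, hM⟩
    have hMk : k ≤ M.card := by
      rw [← hX]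
      refine (Finset.card_le_card ?_).trans (Finset.card_image_le (s := M) (f := fun i => (T i).1))
      intro a ha
      obtain ⟨i, ⟨hi, h⟩, -⟩ := hM a (hXU ha)
      have b1 : a ≠ (T i).2.1 := fun e => Finset.disjoint_left.1 hXY ha (e ▸ (hT i).2.1)
      have b2 : a ≠ (T i).2.2 := fun e => Finset.disjoint_left.1 hXZ ha (e ▸ (hT i).2.2)
      exact Finset.mem_image.2 ⟨i, hi, by tauto⟩
    refine ⟨fun i β => Sum.elim (fun j => if i = j ∧ i ∈ M then (1:ℝ) else 0)
      (fun a => if i ∈ M ∧ (a.1 = (T i).1 ∨ a.1 = (T i).2.1 ∨ a.1 = (T i).2.2) then (1:ℝ) else 0) β,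
      ?_, ?_, ?_, ?_, ?_⟩
    · rintro i (j | a)
      · simp only [Sum.elim_inl]; split_ifs <;> simp
      · simp only [Sum.elim_inr]; split_ifs <;> simp
    · rintro (j | a)
      · simp only [Sum.elim_inl]
        rw [Finset.sum_eq_single j (fun b _ hb => by simp [hb]) (by simp)]
        split_ifs <;> simp
      · simp only [Sum.elim_inr]
        obtain ⟨i, hi, hu⟩ := hM a.1 a.2
        rw [Finset.sum_eq_single i (fun b _ hb => if_neg fun h => hb (hu b h)) (by simp)]
        split_ifs <;> simp
    · intro i j hij
      simp only [Sum.elim_inl, hij.ne, false_and, if_false]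
      split_ifs <;> simp
    · intro i a
      by_cases hi : i ∈ M
      · simp only [Sum.elim_inl, Sum.elim_inr, hi, true_and, and_true, if_true]
        split_ifs <;> simp
      · simp [hi]
    · simp only [hrow]
      have : (k : ℝ) ≤ (M.card : ℝ) := by exact_mod_cast hMk
      refine this.trans (le_of_eq ?_)
      have e : (M.card : ℝ) = ∑ i, if i ∈ M then (1:ℝ) else 0 := by simp
      rw [e]
      refine Finset.sum_congr rfl fun i _ => ?_
      by_cases hi : i ∈ M
      · simp [hi]; norm_num
      · simp [hi]
end

section
/- Let G = (V,E) be a connected bipartite finite simple graph with bipartition V = R ∪ B, let Γ be a group of automorphisms of G, let L = (ℓ_1,…,ℓ_k) be a sequence of distinct leaders with stabilizer-chain orbits O_i, and let S = S(L) be the corresponding SST cuts. Then P(G,S) equals the set {x ∈ ℝ^V : 0 ≤ x_v ≤ 1 for all v; x_u + x_v ≤ 1 for all {u,v} ∈ E; x_f ≤ x_{ℓ_i} for all (ℓ_i,f) ∈ S} if and only if every orbit O_i, i ∈ {1,…,k}, is entirely contained in R or entirely contained in B. -/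
open Finset

/-- The SST cuts `S(L)`: pairs `(ℓ i, f)` with `f ∈ O_i \ {ℓ i}`, for `i < k`. -/
def sstCuts {α : Type*} (Γ : Set (Equiv.Perm α)) (ℓ : ℕ → α) (k : ℕ) : Set (α × α) :=
  {p | ∃ i < k, p.1 = ℓ i ∧ p.2 ∈ sstOrbit Γ ℓ i ∧ p.2 ≠ ℓ i}

/-- `I` is a stable set of `G`. -/
def IsStableSet {V : Type*} (G : SimpleGraph V) (I : Finset V) : Prop :=
  ∀ u ∈ I, ∀ v ∈ I, ¬ G.Adj u v

/-- The indicator vector of a finite node set. -/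
def indic {V : Type*} [DecidableEq V] (I : Finset V) : V → ℝ :=
  fun v => if v ∈ I then 1 else 0

/-- `P(G,S)`: the convex hull of the indicator vectors of stable sets satisfying
all the SST cuts in `S`. -/
def sstPolytope {V : Type*} [DecidableEq V] (G : SimpleGraph V) (S : Set (V × V)) :
    Set (V → ℝ) :=
  convexHull ℝ
    {x | ∃ I : Finset V, IsStableSet G I ∧ x = indic I ∧ ∀ p ∈ S, x p.2 ≤ x p.1}



lemma sst_not_mem {V : Type*} [Fintype V] [DecidableEq V] (G : SimpleGraph V)
    (hconn : G.Connected) (R B : Set V) (hdisjRB : Disjoint R B)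
    (hbip : ∀ u v, G.Adj u v → (u ∈ R ∧ v ∈ B) ∨ (u ∈ B ∧ v ∈ R))
    (S : Set (V × V)) (l f : V) (hl : l ∈ R) (hf : f ∈ B) (hS : (l, f) ∈ S) :
    (fun _ => (1 / 2 : ℝ)) ∉ sstPolytope G S := by
  classical
  let φ : (V → ℝ) →ₗ[ℝ] ℝ :=
    (∑ u, ∑ v, if G.Adj u v then
      ((LinearMap.proj u : (V → ℝ) →ₗ[ℝ] ℝ) + (LinearMap.proj v : (V → ℝ) →ₗ[ℝ] ℝ)) else 0)
      - (LinearMap.proj l : (V → ℝ) →ₗ[ℝ] ℝ)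
  have hφ : ∀ x, φ x = (∑ u, ∑ v, if G.Adj u v then x u + x v else 0) - x l := by
    intro x
    simp only [φ, LinearMap.sub_apply, LinearMap.sum_apply, LinearMap.proj_apply]
    congr 1
    refine Finset.sum_congr rfl fun u _ => Finset.sum_congr rfl fun v _ => ?_
    split_ifs <;> simp
  let c : ℝ := ∑ u, ∑ v, if G.Adj u v then (1 : ℝ) else 0
  have hsub : sstPolytope G S ⊆ {x | φ x ≤ c - 1} := by
    refine convexHull_min ?_ (convex_halfSpace_le φ.isLinear _)
    rintro x ⟨I, hI, rfl, hcut⟩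
    have h01 : ∀ v, indic I v = 0 ∨ indic I v = 1 := by
      intro v; unfold indic; split_ifs <;> simp
    have hedge : ∀ u v, G.Adj u v → indic I u + indic I v ≤ 1 := by
      intro u v huv
      have := hI u
      by_cases hu : u ∈ I
      · have hv : v ∉ I := fun hv => hI u hu v hv huv
        simp [indic, hu, hv]
      · rcases h01 v with h | h <;> rw [h] <;> simp [indic, hu]
    have hle : ∀ u v, (if G.Adj u v then indic I u + indic I v else 0) ≤
        (if G.Adj u v then (1 : ℝ) else 0) := by
      intro u v
      split_ifs with h
      · exact hedge u v h
      · exact le_rfl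
    show φ (indic I) ≤ c - 1
    rw [hφ]
    rcases h01 l with hl0 | hl1
    · -- some edge is slack
      have hslack : ∃ u v, G.Adj u v ∧ indic I u + indic I v ≤ 0 := by
        by_contra hno
        push Not at hno
        have ht : ∀ u v, G.Adj u v → indic I v = 1 - indic I u := by
          intro u v huv
          have h1 := hno u v huv
          have h2 := hedge u v huv
          rcases h01 u with h | h <;> rcases h01 v with h' | h' <;> linarith
        have key : ∀ v, (v ∈ R → indic I v = 0) ∧ (v ∈ B → indic I v = 1) := by
          intro v
          have hr := (SimpleGraph.reachable_iff_reflTransGen l v).1 (hconn.preconnected l v)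
          induction hr with
          | refl => exact ⟨fun _ => hl0, fun h => (Set.disjoint_left.1 hdisjRB hl h).elim⟩
          | @tail b c _ hbc ih =>
            have h1 := ht b c hbc
            rcases hbip b c hbc with ⟨hb, hc⟩ | ⟨hb, hc⟩
            · refine ⟨fun h => (Set.disjoint_left.1 hdisjRB h hc).elim, fun _ => ?_⟩
              rw [h1, ih.1 hb]; norm_num
            · refine ⟨fun _ => ?_, fun h => (Set.disjoint_left.1 hdisjRB hc h).elim⟩
              rw [h1, ih.2 hb]; norm_num
        have h3 := hcut _ hS
        simp only [hl0, (key f).2 hf] at h3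
        linarith
      obtain ⟨u, v, huv, h0⟩ := hslack
      have hu : ∀ u', (∑ v, if G.Adj u' v then indic I u' + indic I v else 0) ≤
          (∑ v, if G.Adj u' v then (1 : ℝ) else 0) - (if u' = u then 1 else 0) := by
        intro u'
        split_ifs with h
        · subst h
          rw [← Finset.add_sum_erase _ _ (Finset.mem_univ v),
            ← Finset.add_sum_erase (a := v) univ (fun v => if G.Adj u' v then (1 : ℝ) else 0)
              (Finset.mem_univ v)]
          have := Finset.sum_le_sum (s := univ.erase v) fun w _ => hle u' w
          simp only [huv, if_true]
          linarith
        · have := Finset.sum_le_sum (s := univ) fun w _ => hle u' w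
          linarith
      have h4 := Finset.sum_le_sum (s := univ) fun w _ => hu w
      rw [Finset.sum_sub_distrib] at h4
      simp only [Finset.sum_ite_eq', Finset.mem_univ, if_true] at h4
      rw [hl0]
      linarith
    · have h4 := Finset.sum_le_sum (s := univ) fun u _ =>
        Finset.sum_le_sum (s := univ) fun w _ => hle u w
      rw [hl1]
      linarith
  intro hmem
  have h := hsub hmem
  simp only [Set.mem_setOf_eq, hφ] at h
  norm_num at h
  have : c = ∑ u, ∑ v, if G.Adj u v then (1 : ℝ) else 0 := rfl
  norm_num at this
  linarith

lemma sst_integral (y : ℝ) (h0 : 0 ≤ y) (h1 : y ≤ 1) :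
    ∫ t in Set.Ioc (0 : ℝ) 1, (if t ≤ y then (1 : ℝ) else 0) = y := by
  have : (fun t : ℝ => if t ≤ y then (1 : ℝ) else 0) = (Set.Iic y).indicator (fun _ => 1) := by
    ext t; simp [Set.indicator]
  rw [this, MeasureTheory.integral_indicator measurableSet_Iic,
    MeasureTheory.Measure.restrict_restrict measurableSet_Iic]
  have : Set.Iic y ∩ Set.Ioc 0 1 = Set.Ioc 0 y := by
    ext t; simp only [Set.mem_inter_iff, Set.mem_Iic, Set.mem_Ioc]
    constructor
    · rintro ⟨a, b, c⟩; exact ⟨b, a⟩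
    · rintro ⟨a, b⟩; exact ⟨b, a, b.trans h1⟩
  rw [this]
  simp [h0]

lemma sst_integrable (y : ℝ) :
    MeasureTheory.Integrable (fun t : ℝ => if t ≤ y then (1 : ℝ) else 0)
      (MeasureTheory.volume.restrict (Set.Ioc (0 : ℝ) 1)) := by
  have : (fun t : ℝ => if t ≤ y then (1 : ℝ) else 0) = (Set.Iic y).indicator (fun _ => 1) := by
    ext t; simp [Set.indicator]
  rw [this]
  exact (MeasureTheory.integrable_const _).indicator measurableSet_Iic

lemma sst_mem {V : Type*} [Fintype V] [DecidableEq V] (G : SimpleGraph V)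
    (R B : Set V)
    (hcover : ∀ v, v ∈ R ∨ v ∈ B) (hdisjRB : Disjoint R B)
    (hbip : ∀ u v, G.Adj u v → (u ∈ R ∧ v ∈ B) ∨ (u ∈ B ∧ v ∈ R))
    (S : Set (V × V)) (hS : ∀ p ∈ S, (p.1 ∈ R ∧ p.2 ∈ R) ∨ (p.1 ∈ B ∧ p.2 ∈ B))
    (x : V → ℝ) (hx : ∀ v, 0 ≤ x v ∧ x v ≤ 1) (he : ∀ u v, G.Adj u v → x u + x v ≤ 1)
    (hc : ∀ p ∈ S, x p.2 ≤ x p.1) : x ∈ sstPolytope G S := by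
  classical
  have hB : ∀ v, v ∈ B → v ∉ R := fun v h h' => Set.disjoint_left.1 hdisjRB h' h
  let I : ℝ → Finset V := fun t =>
    univ.filter fun v => (v ∈ R ∧ t ≤ x v) ∨ (v ∉ R ∧ ¬ t ≤ 1 - x v)
  have hI : ∀ t v, v ∈ I t ↔ (v ∈ R ∧ t ≤ x v) ∨ (v ∉ R ∧ ¬ t ≤ 1 - x v) := by
    intro t v; simp [I]
  let F : ℝ → V → ℝ := fun t => indic (I t)
  have hFR : ∀ v, v ∈ R → (fun t => F t v) = fun t => if t ≤ x v then (1 : ℝ) else 0 := by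
    intro v hv; ext t; simp [F, indic, hI, hv]
  have hFB : ∀ v, v ∉ R → (fun t => F t v) =
      fun t => 1 - if t ≤ 1 - x v then (1 : ℝ) else 0 := by
    intro v hv; ext t
    simp only [F, indic, hI, hv, false_and, not_false_eq_true, true_and, false_or]
    split_ifs <;> simp_all
  let μ := MeasureTheory.volume.restrict (Set.Ioc (0 : ℝ) 1)
  have : MeasureTheory.IsProbabilityMeasure μ := ⟨by simp [μ]⟩
  have hint : ∀ v, MeasureTheory.Integrable (fun t => F t v) μ := by
    intro v
    by_cases hv : v ∈ R
    · rw [hFR v hv]; exact sst_integrable _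
    · rw [hFB v hv]; exact (MeasureTheory.integrable_const _).sub (sst_integrable _)
  have hintF : MeasureTheory.Integrable F μ := MeasureTheory.Integrable.of_eval hint
  have hval : ∫ t, F t ∂μ = x := by
    ext v
    rw [MeasureTheory.eval_integral hint]
    by_cases hv : v ∈ R
    · rw [hFR v hv]; exact sst_integral _ (hx v).1 (hx v).2
    · rw [hFB v hv, MeasureTheory.integral_sub (MeasureTheory.integrable_const _)
        (sst_integrable _), sst_integral _ (by linarith [(hx v).2]) (by linarith [(hx v).1])]
      simp
  rw [← hval]
  refine Convex.integral_mem (convex_convexHull ℝ _) ?_ ?_ hintF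
  · refine Set.Finite.isClosed_convexHull ℝ (Set.Finite.subset (Set.finite_range (indic (V := V))) ?_)
    rintro _ ⟨J, _, rfl, _⟩; exact ⟨J, rfl⟩
  · refine Filter.Eventually.of_forall fun t => subset_convexHull ℝ _ ⟨I t, ?_, rfl, ?_⟩
    · intro u hu v hv huv
      rw [hI] at hu hv
      have h1 := he u v huv
      rcases hbip u v huv with ⟨a, b⟩ | ⟨a, b⟩
      · simp only [a, hB v b, true_and, false_and, not_true_eq_false, not_false_eq_true,
          or_false, false_or] at hu hv
        linarith
      · simp only [b, hB u a, true_and, false_and, not_true_eq_false, not_false_eq_true,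
          or_false, false_or] at hu hv
        linarith
    · intro p hp
      have h1 := hc p hp
      have : p.2 ∈ I t → p.1 ∈ I t := by
        rw [hI, hI]
        rcases hS p hp with ⟨a, b⟩ | ⟨a, b⟩
        · simp only [a, b, true_and, false_and, not_true_eq_false, or_false]
          intro h; linarith
        · simp only [hB _ a, hB _ b, true_and, false_and, not_false_eq_true, false_or]
          intro h h'; apply h; linarith
      show indic (I t) p.2 ≤ indic (I t) p.1
      unfold indic
      split_ifs with h2 h3 <;> first | exact (h3 (this h2)).elim | norm_num

/-- For a connected bipartite graph, `P(G,S)` equals the polytope described by box,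
edge, and SST inequalities iff every orbit lies entirely in one color class. -/
theorem sstPolytope_bipartite_no_path_cuts_iff
    {V : Type*} [Fintype V] [DecidableEq V] (G : SimpleGraph V)
    (hconn : G.Connected) (R B : Set V)
    (hcover : ∀ v, v ∈ R ∨ v ∈ B) (hdisjRB : Disjoint R B)
    (hbip : ∀ u v, G.Adj u v → (u ∈ R ∧ v ∈ B) ∨ (u ∈ B ∧ v ∈ R))
    (Γ : Subgroup (Equiv.Perm V))
    (hΓ : ∀ γ ∈ Γ, ∀ u v, G.Adj (γ u) (γ v) ↔ G.Adj u v)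
    (k : ℕ) (ℓ : ℕ → V) (hdist : ∀ i < k, ∀ j < k, ℓ i = ℓ j → i = j) :
    (sstPolytope G (sstCuts (↑Γ : Set (Equiv.Perm V)) ℓ k)
      = {x : V → ℝ |
          (∀ v, 0 ≤ x v ∧ x v ≤ 1) ∧
          (∀ u v, G.Adj u v → x u + x v ≤ 1) ∧
          (∀ i < k, ∀ f ∈ sstOrbit (↑Γ : Set (Equiv.Perm V)) ℓ i, f ≠ ℓ i →
            x f ≤ x (ℓ i))})
    ↔ ∀ i < k, sstOrbit (↑Γ : Set (Equiv.Perm V)) ℓ i ⊆ R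
        ∨ sstOrbit (↑Γ : Set (Equiv.Perm V)) ℓ i ⊆ B := by
  classical
  have hself : ∀ i, ℓ i ∈ sstOrbit (↑Γ : Set (Equiv.Perm V)) ℓ i := by
    intro i
    refine ⟨1, ?_, rfl⟩
    induction i with
    | zero => exact Γ.one_mem
    | succ n ih => exact ⟨ih, rfl⟩
  constructor
  · intro heq i hi
    have hhalf : (fun _ => (1 / 2 : ℝ)) ∈
        sstPolytope G (sstCuts (↑Γ : Set (Equiv.Perm V)) ℓ k) := by
      rw [heq]
      refine ⟨fun v => by norm_num, fun u v _ => by norm_num, fun _ _ _ _ _ => le_rfl⟩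
    by_contra hno
    rw [not_or, Set.not_subset, Set.not_subset] at hno
    obtain ⟨⟨f, hf, hfR⟩, ⟨g, hg, hgB⟩⟩ := hno
    have hfB := (hcover f).resolve_left hfR
    have hgR := (hcover g).resolve_right hgB
    rcases hcover (ℓ i) with hl | hl
    · exact sst_not_mem G hconn R B hdisjRB hbip (sstCuts (↑Γ : Set (Equiv.Perm V)) ℓ k) (ℓ i) f hl hfB
        ⟨i, hi, rfl, hf, fun h => hfR (Set.mem_of_eq_of_mem (show f = ℓ i from h) hl)⟩ hhalf
    · exact sst_not_mem G hconn B R hdisjRB.symm (fun u v h => (hbip u v h).symm)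
        (sstCuts (↑Γ : Set (Equiv.Perm V)) ℓ k) (ℓ i) g hl hgR
        ⟨i, hi, rfl, hg, fun h => hgB (Set.mem_of_eq_of_mem (show g = ℓ i from h) hl)⟩ hhalf
  · intro hO
    apply Set.Subset.antisymm
    · refine convexHull_min ?_ ?_
      · rintro x ⟨I, hI, rfl, hcut⟩
        refine ⟨fun v => ?_, fun u v huv => ?_, fun i hi f hf hne => ?_⟩
        · unfold indic; split_ifs <;> norm_num
        · have := hI u
          unfold indic
          split_ifs with h1 h2 <;> first | exact (hI u h1 v h2 huv).elim | norm_num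
        · exact hcut (ℓ i, f) ⟨i, hi, rfl, hf, hne⟩
      · rintro x ⟨hx1, hx2, hx3⟩ y ⟨hy1, hy2, hy3⟩ a b ha hb hab
        refine ⟨fun v => ⟨?_, ?_⟩, fun u v huv => ?_, fun i hi f hf hne => ?_⟩ <;>
          simp only [Pi.add_apply, Pi.smul_apply, smul_eq_mul]
        · have := mul_nonneg ha (hx1 v).1
          have := mul_nonneg hb (hy1 v).1
          linarith
        · have := mul_le_mul_of_nonneg_left (hx1 v).2 ha
          have := mul_le_mul_of_nonneg_left (hy1 v).2 hb
          linarith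
        · have := mul_le_mul_of_nonneg_left (hx2 u v huv) ha
          have := mul_le_mul_of_nonneg_left (hy2 u v huv) hb
          linarith
        · have := mul_le_mul_of_nonneg_left (hx3 i hi f hf hne) ha
          have := mul_le_mul_of_nonneg_left (hy3 i hi f hf hne) hb
          linarith
    · rintro x ⟨hx1, hx2, hx3⟩
      refine sst_mem G R B hcover hdisjRB hbip _ ?_ x hx1 hx2 ?_
      · rintro ⟨p, q⟩ ⟨i, hi, h1, h2, h3⟩
        simp only at h1 h2 h3
        subst h1
        rcases hO i hi with h | h
        · exact Or.inl ⟨h (hself i), h h2⟩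
        · exact Or.inr ⟨h (hself i), h h2⟩
      · rintro ⟨p, q⟩ ⟨i, hi, h1, h2, h3⟩
        simp only at h1 h2 h3
        subst h1
        exact hx3 i hi q h2 h3
end

section
/- Let G = (V,E) be a trivially perfect finite simple graph with node weights c ∈ ℤ^V, let Γ be the group of automorphisms of G that preserve c, let L = (ℓ_1,…,ℓ_k) be a sequence of distinct leaders with stabilizer-chain orbits O_i such that the SST cuts S = S(L) are stringent, and let D be the set of nodes removed by the deletion operation (V_0 = V, D_i = {v ∈ V_{i−1} ∩ O_i : {v,ℓ_i} ∈ E}, V_i = V_{i−1} \ D_i, D = ∪_i D_i). Then P(G,S) is exactly the set of x ∈ ℝ^V satisfying: 0 ≤ x_v ≤ 1 for all v ∈ V; Σ_{v∈C} x_v ≤ 1 for every maximal clique C of G; Σ_{f∈C} x_f ≤ x_{ℓ_i} for every i and every clique C of G with C ⊆ O_i \ {ℓ_i}; and x_v = 0 for every v ∈ D. -/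
open Finset

/-- A finite simple graph is trivially perfect: it has an interval representation by
pairwise distinct nonempty closed intervals that forms a laminar family. -/
def TriviallyPerfect {V : Type*} (G : SimpleGraph V) : Prop :=
  ∃ I : V → Set ℝ,
    (∀ v, ∃ a b : ℝ, a ≤ b ∧ I v = Set.Icc a b) ∧
    (∀ v w, v ≠ w → I v ≠ I w) ∧
    (∀ v w, v ≠ w → (G.Adj v w ↔ (I v ∩ I w).Nonempty)) ∧
    (∀ v w, (I v ∩ I w).Nonempty → I v ⊆ I w ∨ I w ⊆ I v)

/-- The leader sequence is stringent: each leader `ℓ i` is chosen from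
`𝔒'_i = (O_0 ∪ … ∪ O_{i-1}) \ {ℓ_0, …, ℓ_{i-1}}` whenever this set is nonempty. -/
def sstStringent {α : Type*} (Γ : Set (Equiv.Perm α)) (ℓ : ℕ → α) (k : ℕ) : Prop :=
  ∀ i < k,
    ((⋃ j < i, sstOrbit Γ ℓ j) \ {v | ∃ j < i, ℓ j = v}).Nonempty →
    ℓ i ∈ (⋃ j < i, sstOrbit Γ ℓ j) \ {v | ∃ j < i, ℓ j = v}

/-- The group of all automorphisms of `G` preserving the node weights `c`. -/
def autSet {V : Type*} (G : SimpleGraph V) (c : V → ℤ) : Set (Equiv.Perm V) :=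
  {γ | (∀ u v, G.Adj (γ u) (γ v) ↔ G.Adj u v) ∧ ∀ v, c (γ v) = c v}

/-- The node sets `V_i` of the deletion operation: `V_0 = V` and
`V_i = V_{i-1} \ D_i` where `D_i` are the nodes of `V_{i-1} ∩ O_i` adjacent to `ℓ i`. -/
def sstKeep {V : Type*} (G : SimpleGraph V) (Γ : Set (Equiv.Perm V)) (ℓ : ℕ → V) :
    ℕ → Set V
  | 0 => Set.univ
  | i + 1 => sstKeep G Γ ℓ i \ {v | v ∈ sstOrbit Γ ℓ i ∧ G.Adj v (ℓ i)}

/-- The set `D = D_1 ∪ … ∪ D_k` of nodes removed by the deletion operation. -/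
def sstDeleted {V : Type*} (G : SimpleGraph V) (Γ : Set (Equiv.Perm V)) (ℓ : ℕ → V)
    (k : ℕ) : Set V :=
  {v | ∃ i < k, v ∈ sstKeep G Γ ℓ i ∧ v ∈ sstOrbit Γ ℓ i ∧ G.Adj v (ℓ i)}


section Helpers

open Classical in
/-- closed neighbourhood -/
noncomputable def nbh {V : Type*} [Fintype V] (G : SimpleGraph V) (u : V) : Finset V :=
  Finset.univ.filter (fun w => w = u ∨ G.Adj u w)

theorem mem_nbh {V : Type*} [Fintype V] {G : SimpleGraph V} {u w : V} :
    w ∈ nbh G u ↔ w = u ∨ G.Adj u w := by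
  simp [nbh]

theorem nbh_nested {V : Type*} [Fintype V] {G : SimpleGraph V} (h : TriviallyPerfect G)
    {u v : V} (huv : G.Adj u v) : nbh G u ⊆ nbh G v ∨ nbh G v ⊆ nbh G u := by
  obtain ⟨I, h1, h2, h3, h4⟩ := h
  have key : ∀ u v, G.Adj u v → I u ⊆ I v → nbh G u ⊆ nbh G v := by
    intro u v huv hs w hw
    rw [mem_nbh] at hw ⊢
    rcases hw with rfl | hw
    · exact Or.inr huv.symm
    · by_cases hwv : w = v
      · exact Or.inl hwv
      · right
        rw [h3 v w (Ne.symm hwv)]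
        have := (h3 u w hw.ne).1 hw
        exact this.mono (Set.inter_subset_inter_left _ hs)
  rcases h4 u v ((h3 u v huv.ne).1 huv) with h | h
  · exact Or.inl (key u v huv h)
  · exact Or.inr (key v u huv.symm h)

theorem mem_sstChain {α : Type*} {Γ : Set (Equiv.Perm α)} {ℓ : ℕ → α} {i : ℕ}
    {γ : Equiv.Perm α} : γ ∈ sstChain Γ ℓ i ↔ γ ∈ Γ ∧ ∀ j < i, γ (ℓ j) = ℓ j := by
  induction i with
  | zero => simp [sstChain]
  | succ i ih =>
    have : γ ∈ sstChain Γ ℓ (i+1) ↔ γ ∈ sstChain Γ ℓ i ∧ γ (ℓ i) = ℓ i := Iff.rfl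
    rw [this, ih]
    constructor
    · rintro ⟨⟨h1, h2⟩, h3⟩
      refine ⟨h1, fun j hj => ?_⟩
      rcases Nat.lt_succ_iff_lt_or_eq.1 hj with h | rfl
      · exact h2 j h
      · exact h3
    · rintro ⟨h1, h2⟩
      exact ⟨⟨h1, fun j hj => h2 j (by omega)⟩, h2 i (by omega)⟩

theorem mem_sstOrbit {α : Type*} {Γ : Set (Equiv.Perm α)} {ℓ : ℕ → α} {i : ℕ} {a : α} :
    a ∈ sstOrbit Γ ℓ i ↔ ∃ γ ∈ sstChain Γ ℓ i, γ (ℓ i) = a := Iff.rfl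

theorem autSet_mul {V : Type*} {G : SimpleGraph V} {c : V → ℤ} {a b : Equiv.Perm V}
    (ha : a ∈ autSet G c) (hb : b ∈ autSet G c) : a * b ∈ autSet G c := by
  refine ⟨fun u v => ?_, fun v => ?_⟩
  · simp only [Equiv.Perm.mul_apply]; rw [ha.1, hb.1]
  · simp only [Equiv.Perm.mul_apply]; rw [ha.2, hb.2]

theorem autSet_inv {V : Type*} {G : SimpleGraph V} {c : V → ℤ} {a : Equiv.Perm V}
    (ha : a ∈ autSet G c) : a⁻¹ ∈ autSet G c := by
  refine ⟨fun u v => ?_, fun v => ?_⟩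
  · rw [← ha.1]; simp
  · rw [← ha.2]; simp

theorem autSet_one {V : Type*} {G : SimpleGraph V} {c : V → ℤ} :
    (1 : Equiv.Perm V) ∈ autSet G c := by
  refine ⟨fun u v => by simp, fun v => by simp⟩

theorem chain_mul {V : Type*} {G : SimpleGraph V} {c : V → ℤ} {ℓ : ℕ → V} {i : ℕ}
    {a b : Equiv.Perm V} (ha : a ∈ sstChain (autSet G c) ℓ i)
    (hb : b ∈ sstChain (autSet G c) ℓ i) : a * b ∈ sstChain (autSet G c) ℓ i := by
  rw [mem_sstChain] at *
  refine ⟨autSet_mul ha.1 hb.1, fun j hj => ?_⟩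
  simp only [Equiv.Perm.mul_apply]; rw [hb.2 j hj, ha.2 j hj]

theorem chain_inv {V : Type*} {G : SimpleGraph V} {c : V → ℤ} {ℓ : ℕ → V} {i : ℕ}
    {a : Equiv.Perm V} (ha : a ∈ sstChain (autSet G c) ℓ i) :
    a⁻¹ ∈ sstChain (autSet G c) ℓ i := by
  rw [mem_sstChain] at *
  refine ⟨autSet_inv ha.1, fun j hj => ?_⟩
  rw [Equiv.Perm.inv_eq_iff_eq]; exact (ha.2 j hj).symm

theorem leader_mem_orbit {V : Type*} {G : SimpleGraph V} {c : V → ℤ} {ℓ : ℕ → V} {i : ℕ} :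
    ℓ i ∈ sstOrbit (autSet G c) ℓ i := by
  refine mem_sstOrbit.2 ⟨1, mem_sstChain.2 ⟨autSet_one, fun j _ => rfl⟩, rfl⟩

theorem chain_anti {V : Type*} {G : SimpleGraph V} {c : V → ℤ} {ℓ : ℕ → V} {i j : ℕ}
    (hij : i ≤ j) {a : Equiv.Perm V} (ha : a ∈ sstChain (autSet G c) ℓ j) :
    a ∈ sstChain (autSet G c) ℓ i := by
  rw [mem_sstChain] at *
  exact ⟨ha.1, fun t ht => ha.2 t (by omega)⟩

theorem phase {V : Type*} {G : SimpleGraph V} {c : V → ℤ} {ℓ : ℕ → V} {k : ℕ}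
    (hstr : sstStringent (autSet G c) ℓ k) (j : ℕ) (hj : j < k) :
    ∃ q ≤ j, (∀ i, q ≤ i → i ≤ j → sstOrbit (autSet G c) ℓ i ⊆ sstOrbit (autSet G c) ℓ q) ∧
      (∀ i < q, ∀ a ∈ sstOrbit (autSet G c) ℓ i, ∃ t < q, ℓ t = a) := by
  induction j with
  | zero =>
    refine ⟨0, le_rfl, fun i _ hi => ?_, fun i hi => absurd hi (by omega)⟩
    have : i = 0 := by omega
    subst this; exact subset_rfl
  | succ j ih =>
    by_cases hne : ((⋃ t < j+1, sstOrbit (autSet G c) ℓ t) \ {v | ∃ t < j+1, ℓ t = v}).Nonempty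
    · obtain ⟨q, hq, h1, h2⟩ := ih (by omega)
      have h3 := hstr (j+1) hj hne
      obtain ⟨h4, h5⟩ := h3
      simp only [Set.mem_iUnion] at h4
      obtain ⟨t, ht, hm⟩ := h4
      have htq : q ≤ t := by
        by_contra hlt
        obtain ⟨r, hr, hr'⟩ := h2 t (by omega) _ hm
        exact h5 ⟨r, by omega, hr'⟩
      refine ⟨q, by omega, fun i hqi hi => ?_, h2⟩
      rcases Nat.le_succ_iff.1 hi with h | rfl
      · exact h1 i hqi h
      · obtain ⟨γ, hγ, hγ'⟩ := h1 t htq (by omega) hm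
        rintro b ⟨τ, hτ, rfl⟩
        refine ⟨τ * γ, chain_mul (chain_anti hqi hτ) hγ, ?_⟩
        simp only [Equiv.Perm.mul_apply]
        simp only at hγ'
        rw [hγ']
    · refine ⟨j+1, le_rfl, fun i h1 h2 => ?_, fun i hi a ha => ?_⟩
      · have : i = j+1 := by omega
        subst this; exact subset_rfl
      · by_contra hcon
        exact hne ⟨a, by simp only [Set.mem_iUnion]; exact ⟨i, hi, ha⟩, hcon⟩

theorem trich {V : Type*} {G : SimpleGraph V} {c : V → ℤ} {ℓ : ℕ → V} {k : ℕ}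
    (hstr : sstStringent (autSet G c) ℓ k) {i j : ℕ} (hij : i ≤ j) (hj : j < k) :
    (∀ a ∈ sstOrbit (autSet G c) ℓ i, ∀ b ∈ sstOrbit (autSet G c) ℓ j,
      ∃ σ ∈ autSet G c, σ a = b) ∨
    (∀ γ ∈ sstChain (autSet G c) ℓ j, ∀ a ∈ sstOrbit (autSet G c) ℓ i, γ a = a) := by
  obtain ⟨q, hq, h1, h2⟩ := phase hstr j hj
  by_cases hqi : q ≤ i
  · left
    intro a ha b hb
    obtain ⟨γ, hγ, rfl⟩ := h1 i hqi hij ha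
    obtain ⟨τ, hτ, rfl⟩ := h1 j hq le_rfl hb
    refine ⟨τ * γ⁻¹, autSet_mul (mem_sstChain.1 hτ).1 (autSet_inv (mem_sstChain.1 hγ).1), ?_⟩
    simp
  · right
    intro γ hγ a ha
    obtain ⟨t, ht, rfl⟩ := h2 i (by omega) a ha
    exact (mem_sstChain.1 hγ).2 t (by omega)

theorem nbh_aut {V : Type*} [Fintype V] {G : SimpleGraph V} {c : V → ℤ} {γ : Equiv.Perm V}
    (hγ : γ ∈ autSet G c) (u w : V) : γ w ∈ nbh G (γ u) ↔ w ∈ nbh G u := by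
  rw [mem_nbh, mem_nbh, hγ.1]; simp

theorem nbh_aut_card {V : Type*} [Fintype V] {G : SimpleGraph V} {c : V → ℤ}
    {γ : Equiv.Perm V} (hγ : γ ∈ autSet G c) (u : V) : (nbh G (γ u)).card = (nbh G u).card := by
  have : nbh G (γ u) = (nbh G u).map γ.toEmbedding := by
    ext w
    obtain ⟨w, rfl⟩ := γ.surjective w
    rw [nbh_aut hγ]; simp
  rw [this, Finset.card_map]

theorem nbh_aut_sub {V : Type*} [Fintype V] {G : SimpleGraph V} {c : V → ℤ}
    {γ : Equiv.Perm V} (hγ : γ ∈ autSet G c) {u v : V} (h : nbh G u ⊆ nbh G v) :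
    nbh G (γ u) ⊆ nbh G (γ v) := by
  intro w hw
  obtain ⟨w, rfl⟩ := γ.surjective w
  rw [nbh_aut hγ] at *
  exact h hw

theorem swap_aut {V : Type*} [Fintype V] [DecidableEq V] {G : SimpleGraph V} {c : V → ℤ}
    {u v : V} (h : nbh G u = nbh G v) (hc : c u = c v) : Equiv.swap u v ∈ autSet G c := by
  have hh : ∀ w, (w = u ∨ G.Adj u w) ↔ (w = v ∨ G.Adj v w) := fun w => by
    rw [← mem_nbh, ← mem_nbh, h]
  have h1 : ∀ w, w ≠ u → w ≠ v → (G.Adj u w ↔ G.Adj v w) := by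
    intro w a b; have := hh w; tauto
  refine ⟨fun a b => ?_, fun a => ?_⟩
  · have s := @G.adj_comm
    simp only [Equiv.swap_apply_def]
    split_ifs <;> subst_vars <;> simp_all [G.adj_comm]
    rw [← h1 a (by assumption) (by assumption), G.adj_comm]
  · simp only [Equiv.swap_apply_def]
    split_ifs <;> simp_all

theorem deleted_of {V : Type*} {G : SimpleGraph V} {c : V → ℤ} {ℓ : ℕ → V} {k i : ℕ}
    (hi : i < k) {f : V} (hf : f ∈ sstOrbit (autSet G c) ℓ i) (ha : G.Adj f (ℓ i)) :
    f ∈ sstDeleted G (autSet G c) ℓ k := by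
  have : ∀ m, f ∈ sstKeep G (autSet G c) ℓ m ∨
      ∃ i < m, f ∈ sstKeep G (autSet G c) ℓ i ∧ f ∈ sstOrbit (autSet G c) ℓ i ∧ G.Adj f (ℓ i) := by
    intro m
    induction m with
    | zero => left; simp [sstKeep]
    | succ m ih =>
      rcases ih with h | ⟨i, h1, h2⟩
      · by_cases hc : f ∈ sstOrbit (autSet G c) ℓ m ∧ G.Adj f (ℓ m)
        · right; exact ⟨m, by omega, h, hc⟩
        · left; exact ⟨h, hc⟩
      · right; exact ⟨i, by omega, h2⟩
  rcases this i with h | ⟨j, h1, h2⟩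
  · exact ⟨i, hi, h, hf, ha⟩
  · exact ⟨j, by omega, h2⟩

/-- twins of same colour with an earlier leader among them -/
theorem twin_orbit {V : Type*} [Fintype V] [DecidableEq V] {G : SimpleGraph V} {c : V → ℤ}
    {ℓ : ℕ → V} {i : ℕ} {u v : V} (hu : u ∈ sstOrbit (autSet G c) ℓ i)
    (h : nbh G u = nbh G v) (hc : c u = c v)
    (h1 : ∀ j < i, ℓ j ≠ u) (h2 : ∀ j < i, ℓ j ≠ v) : v ∈ sstOrbit (autSet G c) ℓ i := by
  obtain ⟨γ, hγ, rfl⟩ := hu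
  refine ⟨Equiv.swap (γ (ℓ i)) v * γ, chain_mul (mem_sstChain.2 ⟨swap_aut h hc, ?_⟩) hγ, ?_⟩
  · intro j hj
    exact Equiv.swap_apply_of_ne_of_ne (h1 j hj) (h2 j hj)
  · simp

theorem hull_of_intervals {V : Type*} [Fintype V] (x s : V → ℝ)
    (hx : ∀ v, 0 ≤ x v) (hs : ∀ v, 0 ≤ s v) (hsx : ∀ v, s v + x v ≤ 1)
    (T : Set (V → ℝ)) (hT : T.Finite)
    (hmem : ∀ θ : ℝ, (fun v => (Set.Ico (s v) (s v + x v)).indicator (fun _ => (1:ℝ)) θ) ∈ T) :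
    x ∈ convexHull ℝ T := by
  let μ : MeasureTheory.Measure ℝ := MeasureTheory.volume.restrict (Set.Ico 0 1)
  have : MeasureTheory.IsProbabilityMeasure μ := ⟨by simp [μ]⟩
  let F : ℝ → V → ℝ := fun θ v => (Set.Ico (s v) (s v + x v)).indicator (fun _ => (1:ℝ)) θ
  have hint : ∀ v, MeasureTheory.Integrable (fun θ => F θ v) μ := by
    intro v
    exact (MeasureTheory.integrable_const (1:ℝ)).indicator measurableSet_Ico
  have hF : MeasureTheory.Integrable F μ := MeasureTheory.Integrable.of_eval hint
  have h := (convex_convexHull ℝ T).integral_mem (hT.isClosed_convexHull ℝ)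
    (Filter.Eventually.of_forall fun θ => subset_convexHull ℝ T (hmem θ)) hF
  convert h
  ext v
  rw [MeasureTheory.eval_integral hint]
  have : Set.Ico (s v) (s v + x v) ∩ Set.Ico 0 1 = Set.Ico (s v) (s v + x v) := by
    apply Set.inter_eq_left.2
    exact Set.Ico_subset_Ico (hs v) (hsx v)
  simp only [F, μ]
  rw [MeasureTheory.integral_indicator measurableSet_Ico, MeasureTheory.Measure.restrict_restrict measurableSet_Ico, this]
  simp [hx v]

theorem stack {V : Type*} [Fintype V] [DecidableEq V] {G : SimpleGraph V}
    (hTP : TriviallyPerfect G) (act : V → Prop) [DecidablePred act] (x : V → ℝ)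
    (hx : ∀ v, 0 ≤ x v)
    (hcl : ∀ C : Finset V, G.IsClique (↑C : Set V) → ∑ v ∈ C, x v ≤ 1) :
    ∃ (s : V → ℝ) (e : V → ℕ), (∀ v, 0 ≤ s v) ∧ (∀ v, s v + x v ≤ 1) ∧
      (∀ u v, G.Adj u v → s u + x u ≤ s v ∨ s v + x v ≤ s u) ∧
      (∀ v, act v → s v = (∑ u ∈ univ.filter (fun u => act u ∧ nbh G v ⊂ nbh G u), x u) +
        ∑ u ∈ univ.filter (fun u => act u ∧ nbh G u = nbh G v ∧ e u < e v), x u) := by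
  classical
  let e : V → ℕ := fun v => Fintype.equivFin V v
  have he : ∀ u v, e u = e v → u = v := fun u v h => by
    simpa [e, Fin.val_inj] using h
  let w : V → ℤ := fun u => if act u then -((nbh G u).card : ℤ) else (nbh G u).card
  have hwa : ∀ u, act u → w u = -((nbh G u).card : ℤ) := fun u h => by simp [w, h]
  have hwn : ∀ u, ¬ act u → w u = ((nbh G u).card : ℤ) := fun u h => by simp [w, h]
  have hpos : ∀ u, 0 < (nbh G u).card := fun u =>
    Finset.card_pos.2 ⟨u, mem_nbh.2 (Or.inl rfl)⟩
  let R : V → V → Prop := fun u v => w u < w v ∨ (w u = w v ∧ e u < e v)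
  have hRt : ∀ a b d, R a b → R b d → R a d := by
    intro a b d h1 h2; simp only [R] at *; omega
  have hRi : ∀ a, ¬ R a a := by intro a h; simp only [R] at h; omega
  have hRtot : ∀ a b, a ≠ b → R a b ∨ R b a := by
    intro a b hab
    have : e a ≠ e b := fun h => hab (he _ _ h)
    simp only [R]; omega
  -- comparability facts
  have hsub : ∀ u v, G.Adj u v → (nbh G u).card ≤ (nbh G v).card → nbh G u ⊆ nbh G v := by
    intro u v huv hc
    rcases nbh_nested hTP huv with h | h
    · exact h
    · exact (Finset.eq_of_subset_of_card_le h hc).symm ▸ subset_rfl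
  have hact : ∀ u v, G.Adj u v → R u v → act v → act u ∧ nbh G v ⊆ nbh G u := by
    intro u v huv hR hv
    have h1 := hpos u
    have h2 := hpos v
    have h3 := hwa v hv
    by_cases hu : act u
    · have h4 := hwa u hu
      refine ⟨hu, hsub v u huv.symm ?_⟩
      simp only [R] at hR; omega
    · have h4 := hwn u hu
      simp only [R] at hR; omega
  have hmid : ∀ u v z, G.Adj u v → R u v → G.Adj z u → R z u → G.Adj z v := by
    intro u v z huv hR hzu hRz
    have hzv : z ≠ v := by
      rintro rfl; exact hRi _ (hRt _ _ _ hR hRz)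
    by_cases hc : (nbh G u).card ≤ (nbh G v).card
    · have := hsub u v huv hc (mem_nbh.2 (Or.inr hzu.symm))
      rcases mem_nbh.1 this with h | h
      · exact absurd h hzv
      · exact h.symm
    · have hu : act u := by
        by_contra hu
        have h4 := hwn u hu
        by_cases hv : act v
        · have h5 := hwa v hv
          simp only [R] at hR; omega
        · have h5 := hwn v hv
          simp only [R] at hR; omega
      have := (hact z u hzu hRz hu).2 (mem_nbh.2 (Or.inr huv))
      rcases mem_nbh.1 this with h | h
      · exact absurd h.symm hzv
      · exact h
  let adm : V → Finset (Finset V) := fun v => univ.filter (fun C =>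
    G.IsClique (↑C : Set V) ∧ ∀ u ∈ C, G.Adj u v ∧ R u v)
  have hmax : ∀ v, ∃ C ∈ adm v, ∀ C' ∈ adm v, ∑ u ∈ C', x u ≤ ∑ u ∈ C, x u := by
    intro v
    exact Finset.exists_max_image (adm v) _ ⟨∅, by simp [adm]⟩
  choose M hM hMmax using hmax
  have hM' : ∀ v, G.IsClique (↑(M v) : Set V) ∧ ∀ u ∈ M v, G.Adj u v ∧ R u v := fun v => by
    have := hM v
    simpa [adm] using this
  have hins : ∀ v, G.IsClique (↑(insert v (M v)) : Set V) ∧ v ∉ M v := by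
    intro v
    refine ⟨?_, fun h => hRi v ((hM' v).2 v h).2⟩
    rw [Finset.coe_insert]
    refine (hM' v).1.insert fun b hb _ => ((hM' v).2 b hb).1.symm
  refine ⟨fun v => ∑ u ∈ M v, x u, e, fun v => Finset.sum_nonneg fun u _ => hx u, ?_, ?_, ?_⟩
  · intro v
    have := hcl _ (hins v).1
    rw [Finset.sum_insert (hins v).2] at this
    simp only; linarith
  · have main : ∀ u v, G.Adj u v → R u v → ∑ z ∈ M u, x z + x u ≤ ∑ z ∈ M v, x z := by
      intro u v huv hR
      have := hMmax v (insert u (M u)) (by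
        simp only [adm, Finset.mem_filter, Finset.mem_univ, true_and]
        refine ⟨(hins u).1, fun z hz => ?_⟩
        rcases Finset.mem_insert.1 hz with rfl | hz
        · exact ⟨huv, hR⟩
        · have := (hM' u).2 z hz
          exact ⟨hmid u v z huv hR this.1 this.2, hRt _ _ _ this.2 hR⟩)
      rw [Finset.sum_insert (hins u).2] at this
      linarith
    intro u v huv
    rcases hRtot u v huv.ne with h | h
    · exact Or.inl (main u v huv h)
    · exact Or.inr (main v u huv.symm h)
  · intro v hv
    rw [← Finset.sum_union]
    · have hB : ∀ u, u ∈ (univ.filter (fun u => act u ∧ nbh G v ⊂ nbh G u) ∪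
          univ.filter (fun u => act u ∧ nbh G u = nbh G v ∧ e u < e v)) ↔ G.Adj u v ∧ R u v := by
        intro u
        simp only [Finset.mem_union, Finset.mem_filter, Finset.mem_univ, true_and]
        constructor
        · intro h
          have hau : act u := by tauto
          have hs : nbh G v ⊆ nbh G u := by
            rcases h with h | h
            · exact h.2.1
            · exact h.2.1 ▸ subset_rfl
          have hne : u ≠ v := by
            rintro rfl
            rcases h with h | h
            · exact h.2.ne rfl
            · exact lt_irrefl _ h.2.2
          refine ⟨?_, ?_⟩
          · rcases mem_nbh.1 (hs (mem_nbh.2 (Or.inl rfl))) with h | h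
            · exact absurd h.symm hne
            · exact h
          · have h1 := hwa u hau
            have h2 := hwa v hv
            rcases h with h | h
            · have := Finset.card_lt_card h.2
              simp only [R]; omega
            · have h3 := h.2.2
              have h4 : (nbh G u).card = (nbh G v).card := by rw [h.2.1]
              simp only [R]; omega
        · rintro ⟨h1, h2⟩
          obtain ⟨h3, h4⟩ := hact u v h1 h2 hv
          have h5 := hwa u h3
          have h6 := hwa v hv
          by_cases heq : nbh G u = nbh G v
          · right
            refine ⟨h3, heq, ?_⟩
            have : (nbh G u).card = (nbh G v).card := by rw [heq]
            simp only [R] at h2; omega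
          · left
            exact ⟨h3, Finset.ssubset_iff_subset_ne.2 ⟨h4, fun h => heq h.symm⟩⟩
      apply le_antisymm
      · apply Finset.sum_le_sum_of_subset_of_nonneg
        · intro u hu
          rw [hB]; exact (hM' v).2 u hu
        · intros; exact hx _
      · apply hMmax
        simp only [adm, Finset.mem_filter, Finset.mem_univ, true_and]
        refine ⟨?_, fun u hu => (hB u).1 hu⟩
        intro a ha b hb hab
        have h1 := (hB a).1 ha
        have h2 := (hB b).1 hb
        have h3 := (hact a v h1.1 h1.2 hv).2 (mem_nbh.2 (Or.inr h2.1.symm))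
        rcases mem_nbh.1 h3 with h | h
        · exact absurd h.symm hab
        · exact h
    · rw [Finset.disjoint_filter]
      rintro u - ⟨_, h1⟩ ⟨_, h2, _⟩
      rw [h2] at h1
      exact h1.ne rfl

/-- active nodes -/
def ActNode {V : Type*} (G : SimpleGraph V) (c : V → ℤ) (ℓ : ℕ → V) (k : ℕ) (v : V) : Prop :=
  ∃ j < k, v ∈ sstOrbit (autSet G c) ℓ j ∧
    ∃ a ∈ sstOrbit (autSet G c) ℓ j, ∃ b ∈ sstOrbit (autSet G c) ℓ j, a ≠ b ∧ ¬ G.Adj a b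

/-- Structure: `p, p'` two members of `O_i`, `u` active above `p`. Then either it is in the
same orbit as `p`, or it is above `p'` as well. -/
theorem act_above {V : Type*} [Fintype V] {G : SimpleGraph V} {c : V → ℤ} {ℓ : ℕ → V} {k : ℕ}
    (hstr : sstStringent (autSet G c) ℓ k) {i : ℕ} (hi : i < k) {p p' u : V}
    (hp : p ∈ sstOrbit (autSet G c) ℓ i) (hp' : p' ∈ sstOrbit (autSet G c) ℓ i)
    (hu : ActNode G c ℓ k u) (hs : nbh G p ⊆ nbh G u) :
    (∃ σ ∈ autSet G c, σ u = p) ∨ nbh G p' ⊆ nbh G u := by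
  obtain ⟨j, hj, huj, a, ha, b, hb, hab, hnab⟩ := hu
  rcases Nat.lt_or_ge i j with hij | hij
  · rcases trich hstr hij.le hj with h | h
    · obtain ⟨σ, hσ, h1⟩ := h p hp u huj
      left
      refine ⟨σ⁻¹, autSet_inv hσ, ?_⟩
      rw [← h1]; simp
    · exfalso
      have key : ∀ a ∈ sstOrbit (autSet G c) ℓ j, nbh G p ⊆ nbh G a := by
        rintro _ ⟨τ, hτ, rfl⟩
        obtain ⟨ρ, hρ, rfl⟩ := huj
        have hm := chain_mul hτ (chain_inv hρ)
        have := nbh_aut_sub (mem_sstChain.1 hm).1 hs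
        rw [h _ hm p hp] at this
        simpa using this
      have h1 := key a ha (mem_nbh.2 (Or.inl rfl))
      have h2 := key b hb (mem_nbh.2 (Or.inl rfl))
      have h3 : b ∈ nbh G p := by
        rw [mem_nbh] at h2 ⊢
        rcases h2 with h | h
        · exact Or.inl h.symm
        · exact Or.inr h.symm
      rcases mem_nbh.1 (key a ha h3) with h | h
      · exact hab h.symm
      · exact hnab h
  · rcases trich hstr hij hi with h | h
    · left; exact h u huj p hp
    · right
      obtain ⟨τ, hτ, rfl⟩ := hp
      obtain ⟨ρ, hρ, rfl⟩ := hp'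
      have hm := chain_mul hρ (chain_inv hτ)
      have := nbh_aut_sub (mem_sstChain.1 hm).1 hs
      rw [h _ hm u huj] at this
      simpa using this

theorem twin_adj {V : Type*} [Fintype V] {G : SimpleGraph V} {u v : V}
    (h : nbh G u ⊆ nbh G v) (hne : u ≠ v) : G.Adj u v := by
  rcases mem_nbh.1 (h (mem_nbh.2 (Or.inl rfl))) with h | h
  · exact absurd h hne
  · exact h.symm

theorem nest {V : Type*} [Fintype V] [DecidableEq V] {G : SimpleGraph V} {c : V → ℤ}
    {ℓ : ℕ → V} {k : ℕ} (hdist : ∀ i < k, ∀ j < k, ℓ i = ℓ j → i = j)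
    (hstr : sstStringent (autSet G c) ℓ k) [DecidablePred (ActNode G c ℓ k)]
    (x s : V → ℝ) (e : V → ℕ) (hx : ∀ v, 0 ≤ x v)
    (hcut : ∀ i < k, ∀ C : Finset V, G.IsClique (↑C : Set V) →
            (↑C : Set V) ⊆ sstOrbit (autSet G c) ℓ i \ {ℓ i} →
            ∑ f ∈ C, x f ≤ x (ℓ i))
    (hdel : ∀ v ∈ sstDeleted G (autSet G c) ℓ k, x v = 0)
    (hs : ∀ v, ActNode G c ℓ k v →
      s v = (∑ u ∈ univ.filter (fun u => ActNode G c ℓ k u ∧ nbh G v ⊂ nbh G u), x u) +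
        ∑ u ∈ univ.filter (fun u => ActNode G c ℓ k u ∧ nbh G u = nbh G v ∧ e u < e v), x u)
    {i : ℕ} (hi : i < k) {f : V} (hf : f ∈ sstOrbit (autSet G c) ℓ i) (hfl : f ≠ ℓ i)
    (hxf : x f ≠ 0) : s (ℓ i) ≤ s f ∧ s f + x f ≤ s (ℓ i) + x (ℓ i) := by
  have hL := @leader_mem_orbit V G c ℓ i
  have hnadj : ¬ G.Adj f (ℓ i) := fun h => hxf (hdel _ (deleted_of hi hf h))
  have hxL : x (ℓ i) ≠ 0 := by
    intro h0
    have := hcut i hi {f} (by simp) (by simpa using ⟨hf, hfl⟩)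
    simp only [Finset.sum_singleton] at this
    have := hx f
    exact hxf (by linarith)
  have haf : ActNode G c ℓ k f := ⟨i, hi, hf, f, hf, ℓ i, hL, hfl, hnadj⟩
  have haL : ActNode G c ℓ k (ℓ i) := ⟨i, hi, hL, f, hf, ℓ i, hL, hfl, hnadj⟩
  have hP : ∀ p ∈ sstOrbit (autSet G c) ℓ i, ∀ p' ∈ sstOrbit (autSet G c) ℓ i, ∀ u,
      ActNode G c ℓ k u → nbh G p ⊂ nbh G u → nbh G p' ⊂ nbh G u := by
    intro p hp p' hp' u hu hss
    have hlt := Finset.card_lt_card hss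
    rcases act_above hstr hi hp hp' hu hss.1 with ⟨σ, hσ, rfl⟩ | h
    · rw [nbh_aut_card hσ] at hlt
      exact absurd hlt (lt_irrefl _)
    · refine Finset.ssubset_iff_subset_ne.2 ⟨h, fun heq => ?_⟩
      obtain ⟨a, ha, rfl⟩ := hp
      obtain ⟨b, hb, rfl⟩ := hp'
      simp only at *
      rw [← heq, nbh_aut_card (mem_sstChain.1 ha).1, nbh_aut_card (mem_sstChain.1 hb).1] at hlt
      exact absurd hlt (lt_irrefl _)
  have hPeq : univ.filter (fun u => ActNode G c ℓ k u ∧ nbh G f ⊂ nbh G u) =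
      univ.filter (fun u => ActNode G c ℓ k u ∧ nbh G (ℓ i) ⊂ nbh G u) := by
    ext u
    simp only [Finset.mem_filter, Finset.mem_univ, true_and]
    exact ⟨fun h => ⟨h.1, hP _ hf _ hL _ h.1 h.2⟩, fun h => ⟨h.1, hP _ hL _ hf _ h.1 h.2⟩⟩
  have htL : ∀ u, ActNode G c ℓ k u → nbh G u = nbh G (ℓ i) → u ≠ ℓ i → x u = 0 := by
    intro u hu hN hne
    have hadj : G.Adj u (ℓ i) := twin_adj (hN ▸ subset_rfl) hne
    rcases act_above hstr hi hL hf hu (hN ▸ subset_rfl) with ⟨σ, hσ, h1⟩ | h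
    · have hc : c u = c (ℓ i) := by rw [← h1, hσ.2]
      by_cases hj : ∃ j < i, ℓ j = u
      · obtain ⟨j, hj, rfl⟩ := hj
        exfalso
        apply hxL
        refine hdel _ (deleted_of (i := j) (by omega) ?_ hadj.symm)
        refine twin_orbit (u := ℓ j) leader_mem_orbit hN hc ?_ ?_
        · intro t ht h
          have := hdist t (by omega) j (by omega) h
          omega
        · intro t ht h
          have := hdist t (by omega) i (by omega) h
          omega
      · push Not at hj
        refine hdel _ (deleted_of hi ?_ hadj)
        refine twin_orbit hL hN.symm hc.symm ?_ hj
        intro t ht h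
        have := hdist t (by omega) i (by omega) h
        omega
    · rw [hN] at h
      exact absurd (twin_adj h hfl) hnadj
  have htf : ∀ u, ActNode G c ℓ k u → nbh G u = nbh G f →
      u ∈ sstOrbit (autSet G c) ℓ i \ {ℓ i} := by
    intro u hu hN
    have hfj : ∀ j < i, ℓ j ≠ f := by
      rintro j hj rfl
      obtain ⟨γ, hγ, h1⟩ := hf
      have h2 := (mem_sstChain.1 hγ).2 j hj
      simp only at h1
      exact hfl (γ.injective (h2.trans h1.symm))
    refine ⟨?_, ?_⟩
    · rcases act_above hstr hi hf hL hu (hN ▸ subset_rfl) with ⟨σ, hσ, h1⟩ | h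
      · have hc : c u = c f := by rw [← h1, hσ.2]
        refine twin_orbit hf hN.symm hc.symm hfj ?_
        rintro j hj rfl
        apply hxf
        refine hdel _ (deleted_of (i := j) (by omega) ?_
          (twin_adj (hN ▸ subset_rfl) (hfj j hj).symm))
        refine twin_orbit (u := ℓ j) leader_mem_orbit hN hc ?_ (fun t ht => hfj t (by omega))
        intro t ht h
        have := hdist t (by omega) j (by omega) h
        omega
      · rw [hN] at h
        exact absurd (twin_adj h hfl.symm).symm hnadj
    · rintro rfl
      exact hnadj (twin_adj (hN ▸ subset_rfl) hfl)
  have hTL : ∑ u ∈ univ.filter (fun u => ActNode G c ℓ k u ∧ nbh G u = nbh G (ℓ i) ∧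
      e u < e (ℓ i)), x u = 0 := by
    refine Finset.sum_eq_zero fun u hu => ?_
    simp only [Finset.mem_filter, Finset.mem_univ, true_and] at hu
    refine htL u hu.1 hu.2.1 ?_
    rintro rfl
    exact lt_irrefl _ hu.2.2
  rw [hs _ haf, hs _ haL, hPeq, hTL]
  have hnn : 0 ≤ ∑ u ∈ univ.filter (fun u => ActNode G c ℓ k u ∧ nbh G u = nbh G f ∧
      e u < e f), x u := Finset.sum_nonneg fun u _ => hx u
  have hcu := hcut i hi (insert f (univ.filter (fun u => ActNode G c ℓ k u ∧ nbh G u = nbh G f ∧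
      e u < e f))) (by
    have hh : ∀ a ∈ insert f (univ.filter (fun u => ActNode G c ℓ k u ∧ nbh G u = nbh G f ∧
      e u < e f)), nbh G a = nbh G f := by
      intro a ha
      simp only [Finset.mem_insert, Finset.mem_filter, Finset.mem_univ, true_and] at ha
      rcases ha with rfl | ha
      · rfl
      · exact ha.2.1
    intro a ha b hb hab
    exact twin_adj (by rw [hh a ha, hh b hb]) hab) (by
    intro a ha
    simp only [Finset.coe_insert, Set.mem_insert_iff, Finset.mem_coe, Finset.mem_filter,
      Finset.mem_univ, true_and] at ha
    rcases ha with rfl | ha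
    · exact htf _ haf rfl
    · exact htf _ ha.1 ha.2.1)
  rw [Finset.sum_insert (by simp)] at hcu
  constructor <;> linarith

theorem exists_max_clique {V : Type*} [Fintype V] [DecidableEq V] (G : SimpleGraph V)
    (C : Finset V) (hC : G.IsClique (↑C : Set V)) :
    ∃ M : Finset V, G.IsClique (↑M : Set V) ∧ C ⊆ M ∧
      ∀ C' : Finset V, G.IsClique (↑C' : Set V) → M ⊆ C' → M = C' := by
  classical
  obtain ⟨M, hM, hmax⟩ := Finset.exists_max_image
    (univ.filter (fun M : Finset V => G.IsClique (↑M : Set V) ∧ C ⊆ M)) Finset.card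
    ⟨C, by simp [hC]⟩
  simp only [Finset.mem_filter, Finset.mem_univ, true_and] at hM hmax
  exact ⟨M, hM.1, hM.2, fun C' h1 h2 =>
    Finset.eq_of_subset_of_card_le h2 (hmax C' ⟨h1, hM.2.trans h2⟩)⟩

theorem stable_clique {V : Type*} [DecidableEq V] {G : SimpleGraph V} {I C : Finset V}
    (hI : IsStableSet G I) (hC : G.IsClique (↑C : Set V)) :
    ∑ v ∈ C, indic I v ≤ 1 ∧ (∑ v ∈ C, indic I v ≠ 0 → ∃ f ∈ C, f ∈ I) := by
  have h : ∑ v ∈ C, indic I v = ((C.filter (fun v => v ∈ I)).card : ℝ) := by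
    simp [indic, Finset.filter_mem_eq_inter]
  rw [h]
  constructor
  · norm_cast
    rw [Finset.card_le_one]
    intro a ha b hb
    simp only [Finset.mem_filter] at ha hb
    by_contra hab
    exact hI a ha.2 b hb.2 (hC ha.1 hb.1 hab)
  · intro hne
    have : (C.filter (fun v => v ∈ I)).Nonempty := by
      rw [← Finset.card_pos]
      exact Nat.pos_of_ne_zero fun h0 => hne (by simp [h0])
    obtain ⟨f, hf⟩ := this
    exact ⟨f, (Finset.mem_filter.1 hf).1, (Finset.mem_filter.1 hf).2⟩

end Helpers

/-- For a trivially perfect graph and stringent SST cuts, `P(G,S)` is completely described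
by box constraints, maximal clique inequalities, SST clique cuts, and setting the nodes
removed by the deletion operation to zero. -/
theorem sstPolytope_triviallyPerfect_description
    {V : Type*} [Fintype V] [DecidableEq V] (G : SimpleGraph V)
    (hTP : TriviallyPerfect G) (c : V → ℤ)
    (k : ℕ) (ℓ : ℕ → V) (hdist : ∀ i < k, ∀ j < k, ℓ i = ℓ j → i = j)
    (hstr : sstStringent (autSet G c) ℓ k) :
    sstPolytope G (sstCuts (autSet G c) ℓ k)
      = {x : V → ℝ |
          (∀ v, 0 ≤ x v ∧ x v ≤ 1) ∧
          (∀ C : Finset V, G.IsClique (↑C : Set V) →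
            (∀ C' : Finset V, G.IsClique (↑C' : Set V) → C ⊆ C' → C = C') →
            ∑ v ∈ C, x v ≤ 1) ∧
          (∀ i < k, ∀ C : Finset V, G.IsClique (↑C : Set V) →
            (↑C : Set V) ⊆ sstOrbit (autSet G c) ℓ i \ {ℓ i} →
            ∑ f ∈ C, x f ≤ x (ℓ i)) ∧
          (∀ v ∈ sstDeleted G (autSet G c) ℓ k, x v = 0)} := by
  classical
  apply Set.Subset.antisymm
  · refine convexHull_min ?_ ?_
    · rintro _ ⟨I, hI, rfl, hS⟩
      have hfol : ∀ i < k, ∀ f ∈ sstOrbit (autSet G c) ℓ i, f ≠ ℓ i → f ∈ I → ℓ i ∈ I := by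
        intro i hi f hf hne hfI
        have := hS (ℓ i, f) ⟨i, hi, rfl, hf, hne⟩
        by_contra hcon
        simp [indic, hfI, hcon] at this
        linarith
      refine ⟨fun v => ?_, fun C hC _ => (stable_clique hI hC).1, fun i hi C hC hCs => ?_, ?_⟩
      · simp only [indic]; split_ifs <;> norm_num
      · by_cases h0 : ∑ v ∈ C, indic I v = 0
        · rw [h0]; simp only [indic]; split_ifs <;> norm_num
        · obtain ⟨f, hf, hfI⟩ := (stable_clique hI hC).2 h0
          have := hfol i hi f (hCs hf).1 (hCs hf).2 hfI
          have h1 : indic I (ℓ i) = 1 := by simp [indic, this]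
          rw [h1]
          exact (stable_clique hI hC).1
      · rintro v ⟨i, hi, _, hv, hadj⟩
        have : v ∉ I := fun hvI => hI v hvI _ (hfol i hi v hv hadj.ne hvI) hadj
        simp [indic, this]
    · rintro x ⟨h1, h2, h3, h4⟩ y ⟨g1, g2, g3, g4⟩ a b ha hb hab
      have hsum : ∀ C : Finset V, ∑ v ∈ C, (a • x + b • y) v =
          a * ∑ v ∈ C, x v + b * ∑ v ∈ C, y v := by
        intro C
        simp [Finset.sum_add_distrib, Finset.mul_sum]
      refine ⟨fun v => ?_, fun C hC hm => ?_, fun i hi C hC hCs => ?_, fun v hv => ?_⟩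
      · simp only [Pi.add_apply, Pi.smul_apply, smul_eq_mul]
        have e1 := mul_nonneg ha (h1 v).1
        have e2 := mul_nonneg hb (g1 v).1
        have e3 := mul_le_mul_of_nonneg_left (h1 v).2 ha
        have e4 := mul_le_mul_of_nonneg_left (g1 v).2 hb
        constructor <;> linarith
      · rw [hsum]
        have e3 := mul_le_mul_of_nonneg_left (h2 C hC hm) ha
        have e4 := mul_le_mul_of_nonneg_left (g2 C hC hm) hb
        linarith
      · rw [hsum]
        have e3 := mul_le_mul_of_nonneg_left (h3 i hi C hC hCs) ha
        have e4 := mul_le_mul_of_nonneg_left (g3 i hi C hC hCs) hb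
        simp only [Pi.add_apply, Pi.smul_apply, smul_eq_mul]
        linarith
      · simp [h4 v hv, g4 v hv]
  · rintro x ⟨h1, h2, h3, h4⟩
    have hx : ∀ v, 0 ≤ x v := fun v => (h1 v).1
    have hcl : ∀ C : Finset V, G.IsClique (↑C : Set V) → ∑ v ∈ C, x v ≤ 1 := by
      intro C hC
      obtain ⟨M, hM, hCM, hmax⟩ := exists_max_clique G C hC
      exact (Finset.sum_le_sum_of_subset_of_nonneg hCM fun v _ _ => hx v).trans (h2 M hM hmax)
    obtain ⟨s, e, hs0, hs1, hs2, hs3⟩ := stack hTP (ActNode G c ℓ k) x hx hcl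
    refine hull_of_intervals x s hx hs0 hs1 _ ?_ ?_
    · refine (Set.finite_range (indic : Finset V → V → ℝ)).subset ?_
      rintro _ ⟨I, _, rfl, _⟩
      exact ⟨I, rfl⟩
    · intro θ
      refine ⟨univ.filter (fun v => θ ∈ Set.Ico (s v) (s v + x v)), ?_, ?_, ?_⟩
      · intro u hu v hv huv
        simp only [Finset.mem_filter, Finset.mem_univ, true_and, Set.mem_Ico] at hu hv
        rcases hs2 u v huv with h | h <;> linarith [hu.1, hu.2, hv.1, hv.2]
      · ext v
        simp only [indic, Set.indicator_apply, Finset.mem_filter, Finset.mem_univ, true_and]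
      · rintro ⟨l, f⟩ ⟨i, hi, hl, hf, hne⟩
        simp only at hl hf hne
        subst hl
        have hnn : (0:ℝ) ≤ (Set.Ico (s (ℓ i)) (s (ℓ i) + x (ℓ i))).indicator
          (fun _ => (1:ℝ)) θ := Set.indicator_nonneg (fun _ _ => zero_le_one) θ
        by_cases hmem : θ ∈ Set.Ico (s f) (s f + x f)
        · have hxf : x f ≠ 0 := by
            intro h0
            have := hmem.1.trans_lt hmem.2
            linarith
          obtain ⟨k1, k2⟩ := nest hdist hstr x s e hx h3 h4 hs3 hi hf hne hxf
          have : θ ∈ Set.Ico (s (ℓ i)) (s (ℓ i) + x (ℓ i)) :=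
            ⟨k1.trans hmem.1, hmem.2.trans_le k2⟩
          simp only [Set.indicator_of_mem hmem, Set.indicator_of_mem this]
          exact le_rfl
        · simp only [Set.indicator_of_notMem hmem]
          exact hnn
end

section
/- Let G = (V,E) be a trivially perfect finite simple graph with |V| = n, let Γ be a group of automorphisms of G, and let L = (ℓ_1,…,ℓ_n) be a sequence of distinct leaders exhausting V, with stabilizer-chain orbits O_1,…,O_n, such that the SST cuts S(L) are stringent. Assume that no orbit contains an edge of E, i.e., no two nodes of any O_i are adjacent in G. Then the matrix whose rows are the incidence rows of all maximal cliques of G together with one row −e_{ℓ_i} + e_f for every i and every f ∈ O_i \ {ℓ_i} (where e_v is the v-th standard unit vector) is totally unimodular. -/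
open Finset

/-- Row indices: maximal cliques of `G`. -/
def MaxCliqueIdx {V : Type*} (G : SimpleGraph V) :=
  {C : Finset V // G.IsClique (↑C : Set V) ∧
    ∀ C' : Finset V, G.IsClique (↑C' : Set V) → C ⊆ C' → C = C'}

/-- Row indices: simple SST cuts, i.e. pairs `(i, f)` with `i < k` and
`f ∈ O_i \ {ℓ i}`. -/
def SSTCutIdx {α : Type*} (Γ : Set (Equiv.Perm α)) (ℓ : ℕ → α) (k : ℕ) :=
  {p : ℕ × α // p.1 < k ∧ p.2 ∈ sstOrbit Γ ℓ p.1 ∧ p.2 ≠ ℓ p.1}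

/-- The clique matrix of `G` extended by the rows `-e_{ℓ i} + e_f` of the simple SST cuts. -/
def cliqueSSTMatrix {V : Type*} [DecidableEq V] (G : SimpleGraph V)
    (Γ : Set (Equiv.Perm V)) (ℓ : ℕ → V) (k : ℕ) :
    Matrix (MaxCliqueIdx G ⊕ SSTCutIdx Γ ℓ k) V ℤ :=
  fun row v =>
    match row with
    | Sum.inl C => if v ∈ C.1 then 1 else 0
    | Sum.inr p => if v = ℓ p.1.1 then -1 else if v = p.1.2 then 1 else 0

theorem gh_aux {m n : Type*} [DecidableEq n] (A : Matrix m n ℤ)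
    (h : ∀ J : Finset n, ∃ ε : n → ℤ, (∀ j, ε j = 1 ∨ ε j = -1) ∧
      ∀ i, |∑ j ∈ J, A i j * ε j| ≤ 1) :
    ∀ (k : ℕ) (f : Fin k → m) (g : Fin k → n), Function.Injective g →
      |(A.submatrix f g).det| ≤ 1 := by
  intro k
  induction k with
  | zero => intro f g _; simp
  | succ k ih =>
    intro f g hg
    set B := A.submatrix f g with hB
    set b : Fin (k+1) → ℤ := fun j => B.adjugate j 0 with hb
    have hb1 : ∀ j, |b j| ≤ 1 := by
      intro j
      simp only [hb, Matrix.adjugate_fin_succ_eq_det_submatrix, abs_mul, abs_pow, abs_neg, abs_one,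
        one_pow, one_mul]
      rw [hB, Matrix.submatrix_submatrix]
      exact ih _ _ (hg.comp Fin.succAbove_right_injective)
    by_cases hD : B.det = 0
    · rw [hD]; simp
    have hBb : ∀ i, ∑ j, B i j * b j = if i = 0 then B.det else 0 := by
      intro i
      have := congrFun (congrFun (Matrix.mul_adjugate B) i) 0
      rw [Matrix.mul_apply] at this
      simpa [Matrix.one_apply] using this
    obtain ⟨j0, hj0⟩ : ∃ j, b j ≠ 0 := by
      by_contra hcon
      push Not at hcon
      have := hBb 0
      simp [hcon] at this
      exact hD this.symm
    obtain ⟨ε, hε, hs⟩ := h ((Finset.univ.filter (fun j => b j ≠ 0)).image g)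
    set e : Fin (k+1) → ℤ := fun j => if b j ≠ 0 then ε (g j) else 0 with he
    have hBe : ∀ i, |∑ j, B i j * e j| ≤ 1 := by
      intro i
      have h1 := hs (f i)
      rw [Finset.sum_image (fun x _ y _ hxy => hg hxy), Finset.sum_filter] at h1
      convert h1 using 3 with j
      simp only [he, hB, Matrix.submatrix_apply]
      split_ifs <;> simp
    have hpar : ∀ j, (2:ℤ) ∣ e j - b j := by
      intro j
      have h1 := abs_le.1 (hb1 j)
      simp only [he]
      split_ifs with hj
      · rcases hε (g j) with h2 | h2 <;> rw [h2] <;> omega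
      · have : b j = 0 := by simpa using hj
        simp [this]
    have hz : ∀ i, i ≠ 0 → ∑ j, B i j * e j = 0 := by
      intro i hi
      have h1 := hBb i
      rw [if_neg hi] at h1
      have h2 : (2:ℤ) ∣ ∑ j, B i j * e j - ∑ j, B i j * b j := by
        rw [← Finset.sum_sub_distrib]
        apply Finset.dvd_sum
        intro j _
        rw [← mul_sub]
        exact (hpar j).mul_left _
      have h3 := abs_le.1 (hBe i)
      omega
    have hfin : B.det * e j0 = b j0 * ∑ j, B 0 j * e j := by
      have h1 : B.adjugate.mulVec (B.mulVec e) = B.det • e := by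
        rw [Matrix.mulVec_mulVec, Matrix.adjugate_mul, Matrix.smul_mulVec, Matrix.one_mulVec]
      have h2 := congrFun h1 j0
      simp only [Pi.smul_apply, smul_eq_mul] at h2
      rw [← h2]
      rw [Matrix.mulVec, dotProduct, Finset.sum_eq_single 0]
      · rfl
      · intro i _ hi
        have : B.mulVec e i = 0 := hz i hi
        rw [this, mul_zero]
      · simp
    have he0 : |e j0| = 1 := by
      simp only [he, if_pos hj0]
      rcases hε (g j0) with h2 | h2 <;> rw [h2] <;> simp
    have h5 : |B.det| = |b j0| * |∑ j, B 0 j * e j| := by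
      rw [← abs_mul, ← hfin, abs_mul, he0, mul_one]
    rw [h5]
    exact mul_le_one₀ (hb1 j0) (abs_nonneg _) (hBe 0)

theorem gh_tu {m n : Type*} [DecidableEq n] (A : Matrix m n ℤ)
    (h : ∀ J : Finset n, ∃ ε : n → ℤ, (∀ j, ε j = 1 ∨ ε j = -1) ∧
      ∀ i, |∑ j ∈ J, A i j * ε j| ≤ 1) : A.IsTotallyUnimodular := by
  intro k f g _ hg
  have h1 := abs_le.1 (gh_aux A h k f g hg)
  have h2 : (A.submatrix f g).det = 0 ∨ (A.submatrix f g).det = 1 ∨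
      (A.submatrix f g).det = -1 := by omega
  rcases h2 with h2 | h2 | h2 <;> rw [h2]
  · exact ⟨0, by simp⟩
  · exact ⟨1, by simp⟩
  · exact ⟨-1, by simp⟩

open Classical in
theorem chain_alt_sum {V : Type*} (I : V → Set ℝ) (D : Finset V)
    (hD : ∀ u ∈ D, ∀ v ∈ D, u ≠ v → I u ⊂ I v ∨ I v ⊂ I u) :
    (∑ v ∈ D, (-1 : ℤ) ^ (D.filter (fun u => I v ⊂ I u)).card) = 0 ∨
    (∑ v ∈ D, (-1 : ℤ) ^ (D.filter (fun u => I v ⊂ I u)).card) = 1 := by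
  set c : V → ℕ := fun v => (D.filter (fun u => I v ⊂ I u)).card with hc
  have hlt : ∀ u ∈ D, ∀ v ∈ D, I u ⊂ I v → c v < c u := by
    intro u _ v hv huv
    apply Finset.card_lt_card
    rw [Finset.ssubset_iff_of_subset]
    · exact ⟨v, by simp [hv, huv], by simp⟩
    · intro w hw
      simp only [Finset.mem_filter] at hw ⊢
      exact ⟨hw.1, huv.trans hw.2⟩
  have hinj : Set.InjOn c D := by
    intro u hu v hv huv
    by_contra hne
    rcases hD u hu v hv hne with h | h
    · exact absurd huv (hlt u hu v hv h).ne'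
    · exact absurd huv (hlt v hv u hu h).ne
  have himg : D.image c = Finset.range D.card := by
    apply Finset.eq_of_subset_of_card_le
    · intro x hx
      obtain ⟨v, hv, rfl⟩ := Finset.mem_image.1 hx
      rw [Finset.mem_range]
      apply Finset.card_lt_card
      rw [Finset.ssubset_iff_of_subset (Finset.filter_subset _ _)]
      exact ⟨v, hv, by simp⟩
    · rw [Finset.card_image_of_injOn hinj, Finset.card_range]
  have : ∑ v ∈ D, (-1 : ℤ) ^ c v = ∑ x ∈ Finset.range D.card, (-1 : ℤ) ^ x := by
    rw [← himg, Finset.sum_image hinj]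
  change ∑ v ∈ D, (-1 : ℤ) ^ c v = 0 ∨ ∑ v ∈ D, (-1 : ℤ) ^ c v = 1
  rw [this, neg_one_geom_sum]
  split_ifs <;> simp

theorem mem_sstChain_iff {α : Type*} (Γ : Set (Equiv.Perm α)) (ℓ : ℕ → α) (i : ℕ)
    (γ : Equiv.Perm α) : γ ∈ sstChain Γ ℓ i ↔ γ ∈ Γ ∧ ∀ j < i, γ (ℓ j) = ℓ j := by
  induction i with
  | zero => simp [sstChain]
  | succ i ih =>
    simp only [sstChain, Set.mem_setOf_eq, ih]
    constructor
    · rintro ⟨⟨h1, h2⟩, h3⟩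
      refine ⟨h1, fun j hj => ?_⟩
      rcases Nat.lt_succ_iff_lt_or_eq.1 hj with h | rfl
      · exact h2 j h
      · exact h3
    · rintro ⟨h1, h2⟩
      exact ⟨⟨h1, fun j hj => h2 j (by omega)⟩, h2 i (by omega)⟩

theorem sst_stage {V : Type*} (Γ : Subgroup (Equiv.Perm V)) (ℓ : ℕ → V) (n : ℕ)
    (hstr : sstStringent (↑Γ : Set (Equiv.Perm V)) ℓ n) (i : ℕ) (hi : i < n) :
    ∃ a ≤ i, (∀ j < a, ∀ v ∈ sstOrbit (↑Γ : Set (Equiv.Perm V)) ℓ j, ∃ j' < a, ℓ j' = v) ∧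
      sstOrbit (↑Γ : Set (Equiv.Perm V)) ℓ i ⊆ sstOrbit (↑Γ : Set (Equiv.Perm V)) ℓ a := by
  induction i using Nat.strong_induction_on with
  | _ i ih =>
    by_cases hs : ∀ j < i, ∀ v ∈ sstOrbit (↑Γ : Set (Equiv.Perm V)) ℓ j, ∃ j' < i, ℓ j' = v
    · exact ⟨i, le_rfl, hs, subset_rfl⟩
    · push Not at hs
      obtain ⟨j, hj, v, hv, hne⟩ := hs
      have h1 := hstr i hi ⟨v, by
        simp only [Set.mem_iUnion]
        exact ⟨j, hj, hv⟩, by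
        rintro ⟨j', hj', h⟩
        exact hne j' hj' h⟩
      obtain ⟨j1, hj1, hm⟩ : ∃ j1, ∃ _ : j1 < i, ℓ i ∈ sstOrbit (↑Γ : Set (Equiv.Perm V)) ℓ j1 := by
        simpa only [Set.mem_iUnion] using h1.1
      obtain ⟨a, ha, hsa, hsub⟩ := ih j1 hj1 (by omega)
      refine ⟨a, by omega, hsa, ?_⟩
      rintro w ⟨γ, hγ, rfl⟩
      obtain ⟨δ, hδ, hδe⟩ := hsub hm
      rw [mem_sstChain_iff] at hγ hδ
      refine ⟨γ * δ, ?_, ?_⟩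
      · rw [mem_sstChain_iff]
        refine ⟨Γ.mul_mem hγ.1 hδ.1, fun j hj => ?_⟩
        rw [Equiv.Perm.mul_apply, hδ.2 j hj, hγ.2 j (by omega)]
      · simp only [Equiv.Perm.mul_apply] at hδe ⊢
        rw [hδe]

/-- Node lies in an orbit with at least two elements. -/
def sstNontriv {V : Type*} (Γ : Set (Equiv.Perm V)) (ℓ : ℕ → V) (n : ℕ) (x : V) : Prop :=
  ∃ i < n, x ∈ sstOrbit Γ ℓ i ∧ ∃ y ∈ sstOrbit Γ ℓ i, y ≠ x

theorem leader_mem_orbit_s7 {V : Type*} (Γ : Subgroup (Equiv.Perm V)) (ℓ : ℕ → V) (i : ℕ) :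
    ℓ i ∈ sstOrbit (↑Γ : Set (Equiv.Perm V)) ℓ i :=
  ⟨1, (mem_sstChain_iff _ _ _ _).2 ⟨Γ.one_mem, fun _ _ => rfl⟩, rfl⟩

theorem anc_iff {V : Type*} (G : SimpleGraph V) (I : V → Set ℝ)
    (hne : ∀ v, (I v).Nonempty)
    (hinj : ∀ v w, v ≠ w → I v ≠ I w)
    (hadj : ∀ v w, v ≠ w → (G.Adj v w ↔ (I v ∩ I w).Nonempty))
    (hlam : ∀ v w, (I v ∩ I w).Nonempty → I v ⊆ I w ∨ I w ⊆ I v)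
    (n : ℕ) (Γ : Subgroup (Equiv.Perm V))
    (hΓ : ∀ γ ∈ Γ, ∀ u v, G.Adj (γ u) (γ v) ↔ G.Adj u v)
    (ℓ : ℕ → V)
    (hstr : sstStringent (↑Γ : Set (Equiv.Perm V)) ℓ n)
    (hnoedge : ∀ i < n, ∀ u ∈ sstOrbit (↑Γ : Set (Equiv.Perm V)) ℓ i,
      ∀ w ∈ sstOrbit (↑Γ : Set (Equiv.Perm V)) ℓ i, ¬ G.Adj u w)
    (i : ℕ) (hi : i < n) (f : V) (hf : f ∈ sstOrbit (↑Γ : Set (Equiv.Perm V)) ℓ i)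
    (x : V) (hx : sstNontriv (↑Γ : Set (Equiv.Perm V)) ℓ n x) :
    I (ℓ i) ⊂ I x ↔ I f ⊂ I x := by
  have hsub : ∀ u v, I u ⊂ I v → G.Adj u v := by
    intro u v h
    have hn : u ≠ v := by rintro rfl; exact (ssubset_irrefl _ h)
    rw [hadj u v hn, Set.inter_eq_left.2 h.subset]
    exact hne u
  have htri : ∀ u v, G.Adj u v → I u ⊂ I v ∨ I v ⊂ I u := by
    intro u v h
    have h1 := hinj u v h.ne
    rcases hlam u v ((hadj u v h.ne).1 h) with h2 | h2
    · exact Or.inl (h2.ssubset_of_ne h1)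
    · exact Or.inr (h2.ssubset_of_ne h1.symm)
  have hli := leader_mem_orbit_s7 Γ ℓ i
  obtain ⟨a, ha, hsa, hOa⟩ := sst_stage Γ ℓ n hstr i hi
  obtain ⟨i', hi', hxi, y, hyi, hyx⟩ := hx
  obtain ⟨a', ha', hsa', hOa'⟩ := sst_stage Γ ℓ n hstr i' hi'
  have hnof : ¬ G.Adj (ℓ i) f := hnoedge i hi _ hli _ hf
  rcases lt_trichotomy a a' with hlt | heq | hgt
  · -- later stage: no ancestor
    have key : ∀ u ∈ sstOrbit (↑Γ : Set (Equiv.Perm V)) ℓ a, ¬ I u ⊂ I x := by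
      intro u hu hux
      obtain ⟨j, hj, rfl⟩ := hsa' a hlt u hu
      obtain ⟨δ, hδ, hδe⟩ := hOa' hxi
      obtain ⟨δ', hδ', hδe'⟩ := hOa' hyi
      rw [mem_sstChain_iff] at hδ hδ'
      simp only at hδe hδe'
      have h1 : G.Adj (ℓ j) (ℓ a') := by
        rw [← hΓ δ hδ.1, hδ.2 j hj, hδe]
        exact hsub _ _ hux
      have h2 : G.Adj (ℓ j) y := by
        rw [← hΓ δ' hδ'.1, hδ'.2 j hj, hδe'] at h1
        exact h1
      have h3 : ¬ G.Adj x y := hnoedge i' hi' _ hxi _ hyi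
      apply h3
      rcases htri _ _ h2 with h4 | h4
      · rw [hadj x y hyx.symm]
        obtain ⟨z, hz⟩ := hne (ℓ j)
        exact ⟨z, hux.subset hz, h4.subset hz⟩
      · exact (hsub _ _ (h4.trans hux)).symm
    exact iff_of_false (key _ (hOa hli)) (key _ (hOa hf))
  · subst heq
    have key : ∀ u ∈ sstOrbit (↑Γ : Set (Equiv.Perm V)) ℓ a, ¬ I u ⊂ I x := by
      intro u hu hux
      exact hnoedge a (by omega) u hu x (hOa' hxi) (hsub _ _ hux)
    exact iff_of_false (key _ (hOa hli)) (key _ (hOa hf))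
  · obtain ⟨j, hj, rfl⟩ := hsa a' hgt x (hOa' hxi)
    obtain ⟨γ, hγ, rfl⟩ := hf
    rw [mem_sstChain_iff] at hγ
    simp only at hnof ⊢
    have hA : G.Adj (γ (ℓ i)) (ℓ j) ↔ G.Adj (ℓ i) (ℓ j) := by
      rw [← hΓ γ hγ.1 (ℓ i) (ℓ j), hγ.2 j (by omega)]
    constructor
    · intro h
      rcases htri _ _ (hA.2 (hsub _ _ h)) with h4 | h4
      · exact h4
      · exact absurd (hsub _ _ (h.trans h4)) hnof
    · intro h
      rcases htri _ _ (hA.1 (hsub _ _ h)) with h4 | h4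
      · exact h4
      · exact absurd (hsub _ _ (h.trans h4)).symm hnof

open Classical in
theorem clique_alt {V : Type*} (G : SimpleGraph V) (I : V → Set ℝ)
    (hne : ∀ v, (I v).Nonempty)
    (hinj : ∀ v w, v ≠ w → I v ≠ I w)
    (hadj : ∀ v w, v ≠ w → (G.Adj v w ↔ (I v ∩ I w).Nonempty))
    (hlam : ∀ v w, (I v ∩ I w).Nonempty → I v ⊆ I w ∨ I w ⊆ I v)
    (C : MaxCliqueIdx G) (J : Finset V) :
    (∑ v ∈ J, if v ∈ C.1 then (-1 : ℤ) ^ (J.filter (fun u => I v ⊂ I u)).card else 0) = 0 ∨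
    (∑ v ∈ J, if v ∈ C.1 then (-1 : ℤ) ^ (J.filter (fun u => I v ⊂ I u)).card else 0) = 1 := by
  obtain ⟨C, hC, hmax⟩ := C
  have hup : ∀ v ∈ C, ∀ u, I v ⊂ I u → u ∈ C := by
    intro v hv u hvu
    have h1 : G.IsClique (↑(insert u C) : Set V) := by
      rw [Finset.coe_insert, SimpleGraph.isClique_insert]
      refine ⟨hC, fun c hc huc => ?_⟩
      rw [hadj u c huc]
      by_cases hcv : c = v
      · subst hcv
        rw [Set.inter_eq_right.2 hvu.subset]; exact hne c
      have h2 := (hadj c v hcv).1 (hC hc hv hcv)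
      obtain ⟨z, hz1, hz2⟩ := h2
      exact ⟨z, hvu.subset hz2, hz1⟩
    rw [hmax _ h1 (Finset.subset_insert _ _)]
    exact Finset.mem_insert_self _ _
  have h := chain_alt_sum I (J.filter (· ∈ C)) (by
    intro u hu v hv huv
    have h1 := hC (Finset.mem_filter.1 hu).2 (Finset.mem_filter.1 hv).2 huv
    have h2 := hinj u v huv
    rcases hlam u v ((hadj u v huv).1 h1) with h3 | h3
    · exact Or.inl (h3.ssubset_of_ne h2)
    · exact Or.inr (h3.ssubset_of_ne h2.symm))
  have he : (∑ v ∈ J, if v ∈ C then (-1 : ℤ) ^ (J.filter (fun u => I v ⊂ I u)).card else 0) =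
      ∑ v ∈ J.filter (· ∈ C), (-1 : ℤ) ^
        ((J.filter (· ∈ C)).filter (fun u => I v ⊂ I u)).card := by
    rw [← Finset.sum_filter]
    apply Finset.sum_congr rfl
    intro v hv
    congr 2
    ext u
    simp only [Finset.mem_filter] at hv ⊢
    constructor
    · rintro ⟨h1, h2⟩
      exact ⟨⟨h1, hup v hv.2 u h2⟩, h2⟩
    · rintro ⟨⟨h1, _⟩, h2⟩
      exact ⟨h1, h2⟩
  convert h using 2

/-- For a trivially perfect graph with a stringent leader sequence exhausting all nodes
such that no orbit contains an edge, the clique matrix extended by the simple SST cuts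
is totally unimodular. -/
theorem cliqueSSTMatrix_isTotallyUnimodular
    {V : Type*} [Fintype V] [DecidableEq V] (G : SimpleGraph V)
    (hTP : TriviallyPerfect G) (n : ℕ) (hn : Fintype.card V = n)
    (Γ : Subgroup (Equiv.Perm V))
    (hΓ : ∀ γ ∈ Γ, ∀ u v, G.Adj (γ u) (γ v) ↔ G.Adj u v)
    (ℓ : ℕ → V) (hdist : ∀ i < n, ∀ j < n, ℓ i = ℓ j → i = j)
    (hexh : ∀ v : V, ∃ i < n, ℓ i = v)
    (hstr : sstStringent (↑Γ : Set (Equiv.Perm V)) ℓ n)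
    (hnoedge : ∀ i < n, ∀ u ∈ sstOrbit (↑Γ : Set (Equiv.Perm V)) ℓ i,
      ∀ w ∈ sstOrbit (↑Γ : Set (Equiv.Perm V)) ℓ i, ¬ G.Adj u w) :
    (cliqueSSTMatrix G (↑Γ : Set (Equiv.Perm V)) ℓ n).IsTotallyUnimodular := by
  classical
  obtain ⟨I, hI, hinj, hadj, hlam⟩ := hTP
  have hne : ∀ v, (I v).Nonempty := by
    intro v
    obtain ⟨a, b, hab, h⟩ := hI v
    rw [h]; exact ⟨a, le_rfl, hab⟩
  apply gh_tu
  intro J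
  obtain ⟨P, hP⟩ : ∃ P : V → Prop, P = sstNontriv (↑Γ : Set (Equiv.Perm V)) ℓ n := ⟨_, rfl⟩
  set s1 : V → ℤ := fun v => (-1 : ℤ) ^ ((J.filter P).filter (fun u => I v ⊂ I u)).card with hs1
  set s2 : V → ℤ :=
    fun v => (-1 : ℤ) ^ ((J.filter (fun v => ¬ P v)).filter (fun u => I v ⊂ I u)).card with hs2
  refine ⟨fun v => if P v then s1 v else - s2 v, ?_, ?_⟩
  · intro v
    have h1 : s1 v = 1 ∨ s1 v = -1 := neg_one_pow_eq_or ℤ _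
    have h2 : s2 v = 1 ∨ s2 v = -1 := neg_one_pow_eq_or ℤ _
    by_cases hv : P v
    · simpa [hv] using h1
    · simp only [hv, if_false]; omega
  · rintro (C | p)
    · have h1 := clique_alt G I hne hinj hadj hlam C (J.filter P)
      have h2 := clique_alt G I hne hinj hadj hlam C (J.filter (fun v => ¬ P v))
      have he : ∑ j ∈ J, cliqueSSTMatrix G (↑Γ : Set (Equiv.Perm V)) ℓ n (Sum.inl C) j *
          (if P j then s1 j else - s2 j) =
          (∑ v ∈ J.filter P, if v ∈ C.1 then s1 v else 0) -
          (∑ v ∈ J.filter (fun v => ¬ P v), if v ∈ C.1 then s2 v else 0) := by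
        rw [Finset.sum_filter, Finset.sum_filter, ← Finset.sum_sub_distrib]
        apply Finset.sum_congr rfl
        intro v _
        simp only [cliqueSSTMatrix]
        by_cases hv : P v <;> by_cases hc : v ∈ C.1 <;> simp [hv, hc]
      rw [he]
      have h1' : (∑ v ∈ J.filter P, if v ∈ C.1 then s1 v else 0) = 0 ∨
          (∑ v ∈ J.filter P, if v ∈ C.1 then s1 v else 0) = 1 := by
        convert h1
      have h2' : (∑ v ∈ J.filter (fun v => ¬ P v), if v ∈ C.1 then s2 v else 0) = 0 ∨
          (∑ v ∈ J.filter (fun v => ¬ P v), if v ∈ C.1 then s2 v else 0) = 1 := by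
        convert h2
      rw [abs_le]
      omega
    · obtain ⟨⟨i, f⟩, hi, hf, hfl⟩ := p
      simp only at hi hf hfl
      have hli := leader_mem_orbit_s7 Γ ℓ i
      have hPl : P (ℓ i) := by rw [hP]; exact ⟨i, hi, hli, f, hf, hfl⟩
      have hPf : P f := by rw [hP]; exact ⟨i, hi, hf, ℓ i, hli, hfl.symm⟩
      have hs : s1 (ℓ i) = s1 f := by
        simp only [hs1]
        congr 2
        apply Finset.filter_congr
        intro x hx
        exact anc_iff G I hne hinj hadj hlam n Γ hΓ ℓ hstr hnoedge i hi f hf x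
          (hP ▸ (Finset.mem_filter.1 hx).2)
      have he : ∑ j ∈ J, cliqueSSTMatrix G (↑Γ : Set (Equiv.Perm V)) ℓ n
          (Sum.inr ⟨⟨i, f⟩, hi, hf, hfl⟩) j * (if P j then s1 j else - s2 j) =
          (if f ∈ J then s1 f else 0) - (if ℓ i ∈ J then s1 f else 0) := by
        have e1 : (if f ∈ J then s1 f else 0) = ∑ j ∈ J, if j = f then s1 f else 0 := by
          rw [Finset.sum_ite_eq']
        have e2 : (if ℓ i ∈ J then s1 f else 0) = ∑ j ∈ J, if j = ℓ i then s1 f else 0 := by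
          rw [Finset.sum_ite_eq']
        rw [e1, e2, ← Finset.sum_sub_distrib]
        apply Finset.sum_congr rfl
        intro v _
        simp only [cliqueSSTMatrix]
        by_cases h1 : v = ℓ i
        · subst h1
          simp [hPl, hs, hfl.symm]
        · by_cases h2 : v = f
          · subst h2
            simp [hPf, h1]
          · simp [h1, h2]
      rw [he, abs_le]
      have h1 : s1 f = 1 ∨ s1 f = -1 := neg_one_pow_eq_or ℤ _
      split_ifs <;> omega
end

section
/- Let T = (V,A) be a finite out-tree rooted at r (a directed tree in which every node is reachable from r by a unique directed path). Say v is a predecessor of w if v ≠ w and there is a directed path from v to w in T. Let 𝔖 be a collection of pairwise disjoint subsets of V, each incomparable (no element of a set is a predecessor of another element of the same set), and suppose 𝔖 is predecessor preserving: for all distinct S_1, S_2 ∈ 𝔖, either no node of S_1 is a predecessor of any node of S_2, or every node v ∈ S_1 that is a predecessor of some node of S_2 is a predecessor of every node of S_2. Let ≻ be a strict total order on V. Then the matrix whose rows are (a) for every directed root-to-leaf path p of T, the incidence row (1 at each node on p, 0 elsewhere), and (b) for every S ∈ 𝔖 and every pair v, w ∈ S with v ≻ w, the row −e_v + e_w,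 is totally unimodular. -/
/-!
An out-tree rooted at `r` is encoded by a parent function `parent : V → V` with
`parent r = r` and every node reaching `r` by iterating `parent`; the arcs are
`(parent w, w)` for `w ≠ r`, so every node is reachable from `r` by a unique
directed path.
-/

/-- `v` is a (strict) predecessor of `w` in the out-tree given by `parent`. -/
def treePred {V : Type*} (parent : V → V) (v w : V) : Prop :=
  v ≠ w ∧ ∃ n : ℕ, parent^[n] w = v

/-- Leaves of the out-tree: nodes with no child. -/
def LeafIdx {V : Type*} (parent : V → V) :=
  {u : V // ∀ w, parent w = u → w = u}

/-- Index set for the ordering rows: a set `S ∈ 𝔖` together with `v, w ∈ S`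
satisfying `v ≻ w`. -/
def OrdPairIdx {V : Type*} (𝔖 : Set (Set V)) (ord : V → V → Prop) :=
  {q : Set V × V × V // q.1 ∈ 𝔖 ∧ q.2.1 ∈ q.1 ∧ q.2.2 ∈ q.1 ∧ ord q.2.1 q.2.2}

open Classical in
/-- The path matrix of the out-tree (one row per root-to-leaf path, with a `1` exactly
at the nodes on the path, i.e. the ancestors of the leaf) extended by the rows
`-e_v + e_w` for `S ∈ 𝔖` and `v, w ∈ S` with `v ≻ w`. -/
noncomputable def pathOrderMatrix {V : Type*} (parent : V → V) (𝔖 : Set (Set V))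
    (ord : V → V → Prop) :
    Matrix (LeafIdx parent ⊕ OrdPairIdx 𝔖 ord) V ℤ :=
  fun row v =>
    match row with
    | Sum.inl u => if ∃ n : ℕ, parent^[n] u.1 = v then 1 else 0
    | Sum.inr q => if v = q.1.2.1 then -1 else if v = q.1.2.2 then 1 else 0

/-- Ghouila-Houri column signing property. -/
def GHprop {m n : Type*} [Fintype n] (A : Matrix m n ℤ) : Prop :=
  ∀ C : Set n, ∃ y : n → ℤ, (∀ j ∈ C, y j = 1 ∨ y j = -1) ∧ (∀ j, j ∉ C → y j = 0) ∧
    ∀ i, (A.mulVec y) i = 0 ∨ (A.mulVec y) i = 1 ∨ (A.mulVec y) i = -1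

lemma GHprop.submatrix {m n m' n' : Type*} [Fintype n] [Fintype n'] {A : Matrix m n ℤ}
    (h : GHprop A) (f : m' → m) (g : n' → n) (hg : Function.Injective g) :
    GHprop (A.submatrix f g) := by
  intro C
  obtain ⟨y, h1, h2, h3⟩ := h (g '' C)
  refine ⟨y ∘ g, fun j hj => h1 _ ⟨j, hj, rfl⟩, fun j hj => h2 _ ?_, fun i => ?_⟩
  · rintro ⟨k, hk, e⟩
    exact hj (hg e ▸ hk)
  · have : ((A.submatrix f g).mulVec (y ∘ g)) i = (A.mulVec y) (f i) := by
      simp only [Matrix.mulVec, dotProduct, Matrix.submatrix_apply, Function.comp]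
      refine Fintype.sum_of_injective g hg _ _ ?_ (fun _ => rfl)
      intro j hj
      rw [h2 j, mul_zero]
      rintro ⟨k, _, rfl⟩
      exact hj ⟨k, rfl⟩
    rw [this]
    exact h3 _

lemma GHprop.det {k : ℕ} : ∀ (B : Matrix (Fin k) (Fin k) ℤ), GHprop B →
    B.det = 0 ∨ B.det = 1 ∨ B.det = -1 := by
  induction k with
  | zero => intro B _; simp
  | succ k ih =>
    intro B hB
    by_cases hd : B.det = 0
    · exact Or.inl hd
    right
    set b : Fin (k+1) → ℤ := fun i => B.adjugate i 0 with hb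
    have hb1 : ∀ i, b i = 0 ∨ b i = 1 ∨ b i = -1 := by
      intro i
      have := ih _ (hB.submatrix (Fin.succAbove 0) (Fin.succAbove i)
        Fin.succAbove_right_injective)
      simp only [hb, Matrix.adjugate_fin_succ_eq_det_submatrix]
      rcases neg_one_pow_eq_or ℤ ((0 : Fin (k+1)) + (i : ℕ) : ℕ) with e | e <;>
      rw [e] <;> rcases this with e | e | e <;> rw [e] <;> simp
    have hBb : ∀ i, (B.mulVec b) i = if i = 0 then B.det else 0 := by
      intro i
      have := congrFun (congrFun (Matrix.mul_adjugate B) i) 0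
      simp only [Matrix.mul_apply, Matrix.smul_apply, Matrix.one_apply] at this
      simp only [Matrix.mulVec, dotProduct, hb, this]
      split_ifs <;> simp
    have hinj : ∀ x : Fin (k+1) → ℤ, B.mulVec x = 0 → x = 0 := fun x hx =>
      Matrix.eq_zero_of_mulVec_eq_zero hd hx
    obtain ⟨y, h1, h2, h3⟩ := hB {i | b i ≠ 0}
    have hpar : ∀ i, (2 : ℤ) ∣ y i - b i := by
      intro i
      by_cases h : b i = 0
      · rw [h2 i (by simpa using h), h]; simp
      · rcases h1 i h with e | e <;> rcases hb1 i with e' | e' | e' <;> rw [e, e'] <;>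
        first | exact absurd e' h | norm_num
    have hpar2 : ∀ i, (2 : ℤ) ∣ (B.mulVec y) i - (B.mulVec b) i := by
      intro i
      rw [← Pi.sub_apply, ← Matrix.mulVec_sub]
      simp only [Matrix.mulVec, dotProduct]
      exact Finset.dvd_sum fun j _ => Dvd.dvd.mul_left (hpar j) _
    set c := (B.mulVec y) 0 with hc
    have hBy : ∀ i, (B.mulVec y) i = if i = 0 then c else 0 := by
      intro i
      split_ifs with h
      · rw [h]
      · have e1 := hpar2 i
        rw [hBb i, if_neg h] at e1
        rcases h3 i with e | e | e <;> rw [e] at e1 ⊢ <;> omega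
    have hkey : c • b - B.det • y = 0 := by
      apply hinj
      rw [Matrix.mulVec_sub, Matrix.mulVec_smul, Matrix.mulVec_smul]
      ext i
      simp only [Pi.sub_apply, Pi.smul_apply, hBb, hBy, smul_eq_mul, Pi.zero_apply]
      split_ifs <;> ring
    have hbne : ∃ i, b i ≠ 0 := by
      by_contra! h
      have := hBb 0
      rw [show b = 0 from funext h, Matrix.mulVec_zero] at this
      simp at this
      exact hd this.symm
    obtain ⟨i, hi⟩ := hbne
    have hk := congrFun hkey i
    simp only [Pi.sub_apply, Pi.smul_apply, smul_eq_mul, Pi.zero_apply] at hk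
    have h30 := h3 0
    rw [← hc] at h30
    rcases h30 with e | e | e <;> rcases h1 i hi with e1 | e1 <;>
      rcases hb1 i with e2 | e2 | e2 <;> rw [e, e1, e2] at hk <;> omega

lemma GHprop.tu {m n : Type*} [Fintype n] {A : Matrix m n ℤ} (h : GHprop A) :
    A.IsTotallyUnimodular := by
  intro k f g _ hg
  rcases GHprop.det _ (h.submatrix f g hg) with e | e | e <;> rw [e]
  · exact ⟨0, rfl⟩
  · exact ⟨1, rfl⟩
  · exact ⟨-1, rfl⟩

open Classical in
lemma chain_sum {V : Type*} (F : Finset V) (lt : V → V → Prop)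
    (hirr : ∀ a, ¬ lt a a) (htr : ∀ a b c, lt a b → lt b c → lt a c)
    (htot : ∀ a ∈ F, ∀ b ∈ F, a ≠ b → lt a b ∨ lt b a) :
    (∑ v ∈ F, (-1 : ℤ) ^ (F.filter (fun u => lt u v)).card) = 0 ∨
    (∑ v ∈ F, (-1 : ℤ) ^ (F.filter (fun u => lt u v)).card) = 1 := by
  set f : V → ℕ := fun v => (F.filter (fun u => lt u v)).card with hf
  have hmono : ∀ a ∈ F, ∀ b, lt a b → f a < f b := by
    intro a ha b hab
    apply Finset.card_lt_card
    rw [Finset.ssubset_iff_of_subset]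
    · exact ⟨a, by simp [ha, hab], by simp [hirr]⟩
    · intro u hu
      simp only [Finset.mem_filter] at hu ⊢
      exact ⟨hu.1, htr _ _ _ hu.2 hab⟩
  have hinj : Set.InjOn f F := by
    intro a ha b hb hab
    by_contra hne
    rcases htot a ha b hb hne with h | h
    · exact absurd hab (hmono a ha b h).ne
    · exact absurd hab (hmono b hb a h).ne'
  have himg : F.image f = Finset.range F.card := by
    apply Finset.eq_of_subset_of_card_le
    · intro x hx
      obtain ⟨v, hv, rfl⟩ := Finset.mem_image.1 hx
      rw [Finset.mem_range]
      apply Finset.card_lt_card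
      rw [Finset.ssubset_iff_of_subset (Finset.filter_subset _ _)]
      exact ⟨v, hv, by simp [hirr]⟩
    · rw [Finset.card_image_of_injOn hinj]; simp
  have : (∑ v ∈ F, (-1 : ℤ) ^ f v) = ∑ i ∈ Finset.range F.card, (-1 : ℤ) ^ i := by
    rw [← himg, Finset.sum_image hinj]
  change (∑ v ∈ F, (-1 : ℤ) ^ f v) = 0 ∨ (∑ v ∈ F, (-1 : ℤ) ^ f v) = 1
  rw [this, neg_one_geom_sum]
  split_ifs <;> simp

lemma treePred_asymm {V : Type*} {r : V} {parent : V → V}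
    (hroot : parent r = r) (hreach : ∀ v, ∃ n : ℕ, parent^[n] v = r) {v w : V}
    (h1 : ∃ n : ℕ, parent^[n] w = v) (h2 : ∃ n : ℕ, parent^[n] v = w) : v = w := by
  obtain ⟨n, hn⟩ := h1
  obtain ⟨m, hm⟩ := h2
  rcases Nat.eq_zero_or_pos n with h0 | h0
  · subst h0; exact hn.symm
  have hr : ∀ k, parent^[k] r = r := fun k => Function.iterate_fixed hroot k
  have hper : parent^[m + n] w = w := by rw [Function.iterate_add_apply, hn, hm]
  obtain ⟨N, hN⟩ := hreach w
  have hw : parent^[(m + n) * N] w = w := by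
    rw [Function.iterate_mul]; exact Function.iterate_fixed hper N
  have hge : N ≤ (m + n) * N := Nat.le_mul_of_pos_left _ (by omega)
  have : parent^[(m + n) * N] w = r := by
    rw [← Nat.sub_add_cancel hge, Function.iterate_add_apply, hN, hr]
  have hwr : w = r := hw.symm.trans this
  rw [← hn, hwr, hr]

lemma treePred_trans {V : Type*} {r : V} {parent : V → V}
    (hroot : parent r = r) (hreach : ∀ v, ∃ n : ℕ, parent^[n] v = r) {a b c : V}
    (h1 : treePred parent a b) (h2 : treePred parent b c) : treePred parent a c := by
  obtain ⟨hab, n, hn⟩ := h1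
  obtain ⟨hbc, m, hm⟩ := h2
  refine ⟨?_, n + m, by rw [Function.iterate_add_apply, hm, hn]⟩
  rintro rfl
  exact hab (treePred_asymm hroot hreach ⟨n, hn⟩ ⟨m, hm⟩)

open Classical in
lemma path_sum {V : Type*} [Fintype V] {r : V} {parent : V → V}
    (hroot : parent r = r) (hreach : ∀ v, ∃ n : ℕ, parent^[n] v = r) (D : Finset V) (x : V) :
    (∑ v ∈ D.filter (fun v => ∃ n : ℕ, parent^[n] x = v),
      (-1 : ℤ) ^ (D.filter (fun u => treePred parent u v)).card) = 0 ∨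
    (∑ v ∈ D.filter (fun v => ∃ n : ℕ, parent^[n] x = v),
      (-1 : ℤ) ^ (D.filter (fun u => treePred parent u v)).card) = 1 := by
  have key := chain_sum (D.filter (fun v => ∃ n : ℕ, parent^[n] x = v)) (treePred parent)
    (fun a h => h.1 rfl) (fun a b c => treePred_trans hroot hreach) (by
      intro a ha b hb hne
      obtain ⟨_, n, rfl⟩ := Finset.mem_filter.1 ha
      obtain ⟨_, m, rfl⟩ := Finset.mem_filter.1 hb
      rcases le_total n m with h | h
      · right
        exact ⟨hne.symm, m - n, by rw [← Function.iterate_add_apply, Nat.sub_add_cancel h]⟩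
      · left
        exact ⟨hne, n - m, by rw [← Function.iterate_add_apply, Nat.sub_add_cancel h]⟩)
  have e : ∀ v ∈ D.filter (fun v => ∃ n : ℕ, parent^[n] x = v),
      (-1 : ℤ) ^ ((D.filter (fun v => ∃ n : ℕ, parent^[n] x = v)).filter
        (fun u => treePred parent u v)).card =
      (-1 : ℤ) ^ (D.filter (fun u => treePred parent u v)).card := by
    intro v hv
    congr 2
    ext u
    simp only [Finset.mem_filter] at hv ⊢
    constructor
    · rintro ⟨⟨h1, _⟩, h2⟩; exact ⟨h1, h2⟩
    · rintro ⟨h1, h2⟩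
      refine ⟨⟨h1, ?_⟩, h2⟩
      obtain ⟨_, n, hn⟩ := hv
      obtain ⟨_, m, hm⟩ := h2
      exact ⟨m + n, by rw [Function.iterate_add_apply, hn, hm]⟩
  rw [Finset.sum_congr rfl e] at key
  exact key

/-- For a predecessor-preserving collection `𝔖` of pairwise disjoint incomparable node
sets of an out-tree and a strict total order `≻`, the path matrix extended by the rows
`-e_v + e_w` (for `v, w` in a common member of `𝔖` with `v ≻ w`) is totally unimodular. -/
theorem pathOrderMatrix_isTotallyUnimodular
    {V : Type*} [Fintype V] [DecidableEq V] (r : V) (parent : V → V)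
    (hroot : parent r = r) (hreach : ∀ v, ∃ n : ℕ, parent^[n] v = r)
    (𝔖 : Set (Set V))
    (hdisj : ∀ S₁ ∈ 𝔖, ∀ S₂ ∈ 𝔖, S₁ ≠ S₂ → Disjoint S₁ S₂)
    (hincomp : ∀ S ∈ 𝔖, ∀ v ∈ S, ∀ w ∈ S, ¬ treePred parent v w)
    (hpp : ∀ S₁ ∈ 𝔖, ∀ S₂ ∈ 𝔖, S₁ ≠ S₂ →
      (∀ v ∈ S₁, ∀ w ∈ S₂, ¬ treePred parent v w) ∨
      (∀ v ∈ S₁, (∃ w ∈ S₂, treePred parent v w) → ∀ w ∈ S₂, treePred parent v w))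
    (ord : V → V → Prop) (hord : IsStrictTotalOrder V ord) :
    (pathOrderMatrix parent 𝔖 ord).IsTotallyUnimodular := by
  classical
  apply GHprop.tu
  intro C
  set D₁ : Finset V := Finset.univ.filter (fun v => v ∈ C ∧ ∃ S ∈ 𝔖, v ∈ S) with hD₁
  set D₂ : Finset V := Finset.univ.filter (fun v => v ∈ C ∧ ¬ ∃ S ∈ 𝔖, v ∈ S) with hD₂
  set g : Finset V → V → ℤ := fun D v =>
    (-1 : ℤ) ^ (D.filter (fun u => treePred parent u v)).card with hg
  set y : V → ℤ := fun v => (if v ∈ D₁ then g D₁ v else 0) - (if v ∈ D₂ then g D₂ v else 0)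
    with hy
  have hg1 : ∀ D v, g D v = 1 ∨ g D v = -1 := fun D v => neg_one_pow_eq_or ℤ _
  have hyC : ∀ j ∈ C, y j = 1 ∨ y j = -1 := by
    intro j hj
    by_cases hS : ∃ S ∈ 𝔖, j ∈ S
    · have m1 : j ∈ D₁ := by simp only [hD₁, Finset.mem_filter, Finset.mem_univ, true_and]; exact ⟨hj, hS⟩
      have m2 : j ∉ D₂ := by simp only [hD₂, Finset.mem_filter, Finset.mem_univ, true_and]; exact fun h => h.2 hS
      simp only [hy, if_pos m1, if_neg m2, sub_zero]
      exact hg1 _ _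
    · have m1 : j ∉ D₁ := by simp only [hD₁, Finset.mem_filter, Finset.mem_univ, true_and]; exact fun h => hS h.2
      have m2 : j ∈ D₂ := by simp only [hD₂, Finset.mem_filter, Finset.mem_univ, true_and]; exact ⟨hj, hS⟩
      simp only [hy, if_neg m1, if_pos m2]
      rcases hg1 D₂ j with e | e <;> rw [e] <;> simp
  have hyn : ∀ j, j ∉ C → y j = 0 := by
    intro j hj
    have m1 : j ∉ D₁ := by simp only [hD₁, Finset.mem_filter, Finset.mem_univ, true_and]; tauto
    have m2 : j ∉ D₂ := by simp only [hD₂, Finset.mem_filter, Finset.mem_univ, true_and]; tauto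
    simp only [hy, if_neg m1, if_neg m2, sub_zero]
  refine ⟨y, hyC, hyn, ?_⟩
  rintro (u | ⟨⟨S, v, w⟩, hS, hv, hw, hvw⟩)
  · have hsum : ((pathOrderMatrix parent 𝔖 ord).mulVec y) (Sum.inl u) =
        (∑ v ∈ D₁.filter (fun v => ∃ n : ℕ, parent^[n] u.1 = v), g D₁ v) -
        (∑ v ∈ D₂.filter (fun v => ∃ n : ℕ, parent^[n] u.1 = v), g D₂ v) := by
      have aux : ∀ D : Finset V, (∑ v ∈ D.filter (fun v => ∃ n : ℕ, parent^[n] u.1 = v), g D v) =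
          ∑ v, (if ∃ n : ℕ, parent^[n] u.1 = v then (if v ∈ D then g D v else 0) else 0) := by
        intro D
        rw [Finset.sum_filter, ← Finset.sum_filter_add_sum_filter_not Finset.univ (fun v => v ∈ D)]
        rw [Finset.filter_mem_eq_inter, Finset.univ_inter]
        rw [Finset.sum_eq_zero (s := Finset.univ.filter (fun v => v ∉ D)), add_zero]
        · apply Finset.sum_congr rfl
          intro v hv
          simp [hv]
        · intro v hv
          simp [(Finset.mem_filter.1 hv).2]
      rw [aux, aux, ← Finset.sum_sub_distrib]
      simp only [Matrix.mulVec, dotProduct, pathOrderMatrix]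
      apply Finset.sum_congr rfl
      intro v _
      by_cases h : ∃ n : ℕ, parent^[n] u.1 = v
      · rw [if_pos h, if_pos h, if_pos h, one_mul]
      · rw [if_neg h, if_neg h, if_neg h]; simp
    rw [hsum]
    have key : ∀ D : Finset V,
        (∑ v ∈ D.filter (fun v => ∃ n : ℕ, parent^[n] u.1 = v), g D v) = 0 ∨
        (∑ v ∈ D.filter (fun v => ∃ n : ℕ, parent^[n] u.1 = v), g D v) = 1 := by
      intro D
      convert path_sum hroot hreach D u.1
    rcases key D₁ with e1 | e1 <;> rcases key D₂ with e2 | e2 <;>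
    rw [e1, e2] <;> simp
  · have hne : v ≠ w := by
      rintro rfl
      exact hord.irrefl _ hvw
    have hsum : ((pathOrderMatrix parent 𝔖 ord).mulVec y)
        (Sum.inr ⟨⟨S, v, w⟩, hS, hv, hw, hvw⟩) = - y v + y w := by
      simp only [Matrix.mulVec, dotProduct, pathOrderMatrix]
      rw [Finset.sum_eq_add v w hne]
      · simp [hne.symm]
      · intro c _ hc
        simp [hc.1, hc.2]
      · simp
      · simp
    rw [hsum]
    by_cases cv : v ∈ C
    · by_cases cw : w ∈ C
      · have : y v = y w := by
          have m1 : v ∈ D₁ := by simp only [hD₁, Finset.mem_filter, Finset.mem_univ, true_and]; exact ⟨cv, S, hS, hv⟩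
          have m2 : v ∉ D₂ := by simp only [hD₂, Finset.mem_filter, Finset.mem_univ, true_and]; exact fun h => h.2 ⟨S, hS, hv⟩
          have m3 : w ∈ D₁ := by simp only [hD₁, Finset.mem_filter, Finset.mem_univ, true_and]; exact ⟨cw, S, hS, hw⟩
          have m4 : w ∉ D₂ := by simp only [hD₂, Finset.mem_filter, Finset.mem_univ, true_and]; exact fun h => h.2 ⟨S, hS, hw⟩
          simp only [hy, if_pos m1, if_neg m2, if_pos m3, if_neg m4, sub_zero, hg]
          have hmain : ∀ a ∈ S, ∀ b ∈ S, ∀ x ∈ D₁, treePred parent x a → treePred parent x b := by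
            intro a ha b hb x hx hxa
            obtain ⟨_, S₁, hS₁, hx₁⟩ := (Finset.mem_filter.1 hx).2
            have hSS : S₁ ≠ S := by
              rintro rfl
              exact hincomp _ hS₁ x hx₁ a ha hxa
            rcases hpp S₁ hS₁ S hS hSS with h | h
            · exact absurd hxa (h x hx₁ a ha)
            · exact h x hx₁ ⟨a, ha, hxa⟩ b hb
          congr 2
          apply Finset.filter_congr
          intro x hx
          exact ⟨hmain v hv w hw x hx, hmain w hw v hv x hx⟩
        left; rw [this]; ring
      · rw [hyn w cw]
        rcases hyC v cv with e | e <;> rw [e] <;> simp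
    · rw [hyn v cv]
      by_cases cw : w ∈ C
      · rcases hyC w cw with e | e <;> rw [e] <;> simp
      · rw [hyn w cw]; simp
end

section
/- Let G = (V,E) be a finite simple graph, Γ a group of automorphisms of G, L a sequence of distinct leaders with stabilizer-chain orbits O_i, and S = S(L) the SST cuts. For every leader ℓ = ℓ_i with orbit O_ℓ = O_i, and every clique C of G with C ⊆ O_ℓ, the SST clique cut −x_ℓ + Σ_{f∈C} x_f ≤ 0 is valid for P(G,S); that is, every stable set I of G whose indicator vector satisfies all SST cuts in S satisfies |I ∩ C| ≤ (χ_I)_ℓ, and hence every x ∈ P(G,S) satisfies Σ_{f∈C} x_f ≤ x_ℓ. -/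
open Finset

/-- SST clique cuts are valid for `P(G,S)`: for a leader `ℓ i` and a clique `C`
contained in its orbit, every stable set whose indicator satisfies the SST cuts
contains at most `(χ_I)_{ℓ i}` nodes of `C`, and hence every `x ∈ P(G,S)` satisfies
`∑_{f ∈ C} x f ≤ x (ℓ i)`. -/
theorem sstCliqueCut_valid
    {V : Type*} [Fintype V] [DecidableEq V] (G : SimpleGraph V)
    (Γ : Subgroup (Equiv.Perm V))
    (hΓ : ∀ γ ∈ Γ, ∀ u v, G.Adj (γ u) (γ v) ↔ G.Adj u v)
    (k : ℕ) (ℓ : ℕ → V) (hdist : ∀ i < k, ∀ j < k, ℓ i = ℓ j → i = j)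
    (i : ℕ) (hi : i < k) (C : Finset V) (hC : G.IsClique (↑C : Set V))
    (hCO : (↑C : Set V) ⊆ sstOrbit (↑Γ : Set (Equiv.Perm V)) ℓ i) :
    (∀ I : Finset V, IsStableSet G I →
      (∀ p ∈ sstCuts (↑Γ : Set (Equiv.Perm V)) ℓ k, indic I p.2 ≤ indic I p.1) →
      ((I ∩ C).card : ℝ) ≤ indic I (ℓ i)) ∧
    (∀ x ∈ sstPolytope G (sstCuts (↑Γ : Set (Equiv.Perm V)) ℓ k),
      ∑ f ∈ C, x f ≤ x (ℓ i)) := by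
  have key : ∀ I : Finset V, IsStableSet G I →
      (∀ p ∈ sstCuts (↑Γ : Set (Equiv.Perm V)) ℓ k, indic I p.2 ≤ indic I p.1) →
      ((I ∩ C).card : ℝ) ≤ indic I (ℓ i) := by
    intro I hI hS
    have h1 : (I ∩ C).card ≤ 1 := by
      rw [Finset.card_le_one]
      intro a ha b hb
      rw [Finset.mem_inter] at ha hb
      by_contra hab
      exact hI a ha.1 b hb.1 (hC (by simpa using ha.2) (by simpa using hb.2) hab)
    by_cases hl : ℓ i ∈ I
    · simp only [indic, hl, if_true]
      exact_mod_cast h1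
    · have h0 : I ∩ C = ∅ := by
        rw [Finset.eq_empty_iff_forall_notMem]
        intro f hf
        rw [Finset.mem_inter] at hf
        have hne : f ≠ ℓ i := by
          rintro rfl
          exact hl hf.1
        have h := hS (ℓ i, f) ⟨i, hi, rfl, hCO (by simpa using hf.2), hne⟩
        simp only [indic, hl, hf.1, if_true, if_false] at h
        linarith
      simp [h0, indic, hl]
  refine ⟨key, ?_⟩
  intro x hx
  have hconv : Convex ℝ {x : V → ℝ | ∑ f ∈ C, x f ≤ x (ℓ i)} := by
    intro y hy z hz a b ha hb _
    simp only [Set.mem_setOf_eq, Pi.add_apply, Pi.smul_apply, smul_eq_mul,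
      Finset.sum_add_distrib, ← Finset.mul_sum] at *
    exact add_le_add (mul_le_mul_of_nonneg_left hy ha) (mul_le_mul_of_nonneg_left hz hb)
  refine convexHull_min ?_ hconv hx
  rintro y ⟨I, hI, rfl, hS⟩
  have h := key I hI hS
  have hs : ∑ f ∈ C, indic I f = ((I ∩ C).card : ℝ) := by
    simp [indic, Finset.inter_comm]
  rw [Set.mem_setOf_eq, hs]
  exact h
end

section
/- Let G = (V,E) be a finite simple graph, let ℓ ∈ V, let Γ be a group of automorphisms of G, and let O_ℓ = {γ(ℓ) : γ ∈ Γ} be the orbit of ℓ. Set O'_ℓ = O_ℓ \ {ℓ} and S = {(ℓ,f) : f ∈ O'_ℓ}. Assume C ⊆ O'_ℓ is a maximal clique of the induced subgraph G[O'_ℓ] and that no node of O'_ℓ is adjacent to ℓ. Then the SST clique cut Σ_{i∈C} x_i ≤ x_ℓ defines a facet of P(G,S); concretely, for every a ∈ ℝ^V and b ∈ ℝ such that ⟨a, χ_I⟩ ≤ b holds for every stable set I of G with (χ_I)_f ≤ (χ_I)_ℓ for all f ∈ O'_ℓ, and such that ⟨a, χ_I⟩ = b holds for every such I with Σ_{i∈C}(χ_I)_i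 = (χ_I)_ℓ, one has b = 0 and there exists λ ∈ ℝ with a_v = λ for all v ∈ C, a_ℓ = −λ, and a_v = 0 for all v ∈ V \ (C ∪ {ℓ}). -/
open Finset

/-- The SST clique cut `∑_{i ∈ C} x_i ≤ x_ℓ` defines a facet of `P(G,S)` when `C` is a
maximal clique of the subgraph induced on `O'_ℓ = O_ℓ \ {ℓ}` and no node of `O'_ℓ` is
adjacent to `ℓ`: any valid inequality `⟨a,x⟩ ≤ b` that is tight on the face cut out by
the clique cut is a multiple of the clique cut. -/
theorem sstCliqueCut_facet
    {V : Type*} [Fintype V] [DecidableEq V] (G : SimpleGraph V)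
    (Γ : Subgroup (Equiv.Perm V))
    (hΓ : ∀ γ ∈ Γ, ∀ u v, G.Adj (γ u) (γ v) ↔ G.Adj u v)
    (l : V)
    (O' : Set V) (hO' : O' = {w | ∃ γ ∈ Γ, γ l = w} \ {l})
    (C : Finset V) (hCsub : (↑C : Set V) ⊆ O') (hCclique : G.IsClique (↑C : Set V))
    (hCmax : ∀ C' : Finset V, (↑C' : Set V) ⊆ O' → G.IsClique (↑C' : Set V) →
      C ⊆ C' → C' = C)
    (hnoadj : ∀ f ∈ O', ¬ G.Adj l f)
    (a : V → ℝ) (b : ℝ)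
    (hvalid : ∀ I : Finset V, IsStableSet G I →
      (∀ f ∈ O', indic I f ≤ indic I l) → ∑ v ∈ I, a v ≤ b)
    (htight : ∀ I : Finset V, IsStableSet G I →
      (∀ f ∈ O', indic I f ≤ indic I l) →
      (∑ i ∈ C, indic I i = indic I l) → ∑ v ∈ I, a v = b) :
    b = 0 ∧ ∃ lam : ℝ, (∀ v ∈ C, a v = lam) ∧ a l = -lam ∧
      ∀ v : V, v ∉ C → v ≠ l → a v = 0 := by
  have hlO : l ∉ O' := by rw [hO']; simp
  have hlC : l ∉ C := fun h => hlO (hCsub h)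
  have hb : b = 0 := by
    have := htight ∅ (by simp [IsStableSet]) (by simp [indic]) (by simp [indic])
    simpa using this.symm
  subst hb
  -- pairs {l, u} with u ∈ C
  have hpair : ∀ u ∈ C, a l + a u = 0 := by
    intro u hu
    have hul : l ≠ u := fun h => hlC (h ▸ hu)
    have hna : ¬ G.Adj l u := hnoadj u (hCsub hu)
    have hna' : ¬ G.Adj u l := fun h => hna h.symm
    have h := htight {l, u} (by
        intro x hx y hy
        simp only [Finset.mem_insert, Finset.mem_singleton] at hx hy
        rcases hx with rfl | rfl <;> rcases hy with rfl | rfl <;>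
          first | assumption | exact G.irrefl)
      (by
        intro f _
        simp only [indic, Finset.mem_insert_self, if_true]
        split_ifs <;> norm_num)
      (by
        rw [Finset.sum_eq_single u]
        · simp [indic]
        · intro w hw hwu
          have : w ≠ l := fun h => hlC (h ▸ hw)
          simp [indic, hwu, this]
        · intro h; exact absurd hu h)
    rwa [Finset.sum_pair hul] at h
  refine ⟨rfl, -a l, fun v hv => by linarith [hpair v hv], by ring, ?_⟩
  intro v hvC hvl
  by_cases hvO : v ∈ O'
  · have hex : ∃ u ∈ C, ¬ G.Adj v u := by
      by_contra hcon
      push Not at hcon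
      have := hCmax (insert v C) (by
          intro x hx
          rcases Finset.mem_insert.1 (Finset.mem_coe.1 hx) with rfl | hx
          · exact hvO
          · exact hCsub hx)
        (by
          rw [Finset.coe_insert, SimpleGraph.isClique_insert]
          exact ⟨hCclique, fun u hu _ => hcon u hu⟩)
        (Finset.subset_insert _ _)
      exact hvC (this ▸ Finset.mem_insert_self v C)
    obtain ⟨u, hu, hvu⟩ := hex
    have hul : l ≠ u := fun h => hlC (h ▸ hu)
    have huv : u ≠ v := fun h => hvC (h ▸ hu)
    have hna : ¬ G.Adj l u := hnoadj u (hCsub hu)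
    have hna' : ¬ G.Adj u l := fun h => hna h.symm
    have hnb : ¬ G.Adj l v := hnoadj v hvO
    have hnb' : ¬ G.Adj v l := fun h => hnb h.symm
    have huv' : ¬ G.Adj u v := fun h => hvu h.symm
    have h := htight {l, u, v} (by
        intro x hx y hy
        simp only [Finset.mem_insert, Finset.mem_singleton] at hx hy
        rcases hx with rfl | rfl | rfl <;> rcases hy with rfl | rfl | rfl <;>
          first | assumption | exact G.irrefl)
      (by
        intro f _
        simp only [indic, Finset.mem_insert_self, if_true]
        split_ifs <;> norm_num)
      (by
        rw [Finset.sum_eq_single u]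
        · simp [indic]
        · intro w hw hwu
          have h1 : w ≠ l := fun h => hlC (h ▸ hw)
          have h2 : w ≠ v := fun h => hvC (h ▸ hw)
          simp [indic, hwu, h1, h2]
        · intro h; exact absurd hu h)
    rw [Finset.sum_insert (by simp [hul, hvl.symm]), Finset.sum_pair huv] at h
    linarith [hpair u hu]
  · have h := htight {v} (by
        intro x hx y hy
        rw [Finset.mem_singleton] at hx hy
        subst hx; subst hy
        exact G.irrefl)
      (by
        intro f hf
        have : f ≠ v := fun h => hvO (h ▸ hf)
        simp only [indic, Finset.mem_singleton, this, if_false]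
        split_ifs <;> norm_num)
      (by
        rw [Finset.sum_eq_zero]
        · simp [indic, hvl.symm]
        · intro w hw
          have : w ≠ v := fun h => hvC (h ▸ hw)
          simp [indic, this])
    simpa using h
end

section
/- Let G = (V,E) be a connected bipartite finite simple graph with bipartition V = R ∪ B, let Γ be a group of automorphisms of G, and let L = (ℓ_1,…,ℓ_k) be a sequence of distinct leaders with stabilizer-chain orbits O_i. Then there is at most one index i ∈ {1,…,k} such that O_i ∩ R ≠ ∅ and O_i ∩ B ≠ ∅. -/
open Finset

theorem sstAux_chain {V : Type*} (Γ : Set (Equiv.Perm V)) (ℓ : ℕ → V) (n : ℕ) :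
    ∀ γ ∈ sstChain Γ ℓ (n + 1), γ ∈ Γ ∧ γ (ℓ 0) = ℓ 0 := by
  induction n with
  | zero => intro γ h; exact h
  | succ n ih => intro γ h; exact ih γ h.1

theorem sstAux_side {V : Type*} (G : SimpleGraph V)
    (hconn : G.Connected) (R B : Set V) (hdisjRB : Disjoint R B)
    (hbip : ∀ u v, G.Adj u v → (u ∈ R ∧ v ∈ B) ∨ (u ∈ B ∧ v ∈ R))
    (γ : Equiv.Perm V) (hγ : ∀ u v, G.Adj (γ u) (γ v) ↔ G.Adj u v)
    (w : V) (hw : γ w = w) (v : V) : γ v ∈ R ↔ v ∈ R := by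
  have key : ∀ x y : V, G.Walk x y → (γ x ∈ R ↔ x ∈ R) → (γ y ∈ R ↔ y ∈ R) := by
    intro x y p
    induction p with
    | nil => exact id
    | cons h p ih =>
      intro hx
      apply ih
      have hd : ∀ a, a ∈ R → a ∈ B → False := fun a ha hb =>
        Set.disjoint_left.mp hdisjRB ha hb
      have h1 := hbip _ _ h
      have h2 := hbip _ _ ((hγ _ _).2 h)
      grind
  obtain ⟨p⟩ := hconn.preconnected w v
  exact key w v p (by rw [hw])

theorem sstAux_zero {V : Type*} (G : SimpleGraph V)
    (hconn : G.Connected) (R B : Set V) (hdisjRB : Disjoint R B)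
    (hbip : ∀ u v, G.Adj u v → (u ∈ R ∧ v ∈ B) ∨ (u ∈ B ∧ v ∈ R))
    (Γ : Subgroup (Equiv.Perm V))
    (hΓ : ∀ γ ∈ Γ, ∀ u v, G.Adj (γ u) (γ v) ↔ G.Adj u v) (ℓ : ℕ → V) (j : ℕ)
    (h1 : (sstOrbit (↑Γ : Set (Equiv.Perm V)) ℓ j ∩ R).Nonempty)
    (h2 : (sstOrbit (↑Γ : Set (Equiv.Perm V)) ℓ j ∩ B).Nonempty) : j = 0 := by
  cases j with
  | zero => rfl
  | succ n =>
    obtain ⟨_, ⟨a, ha, rfl⟩, haR⟩ := h1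
    obtain ⟨_, ⟨b, hb, rfl⟩, hbB⟩ := h2
    obtain ⟨ha1, ha2⟩ := sstAux_chain _ _ _ _ ha
    obtain ⟨hb1, hb2⟩ := sstAux_chain _ _ _ _ hb
    have e1 := sstAux_side G hconn R B hdisjRB hbip a (hΓ a ha1) _ ha2 (ℓ (n + 1))
    have e2 := sstAux_side G hconn R B hdisjRB hbip b (hΓ b hb1) _ hb2 (ℓ (n + 1))
    exact (Set.disjoint_left.mp hdisjRB (e2.2 (e1.1 haR)) hbB).elim

/-- In a connected bipartite graph, at most one orbit of the stabilizer chain meets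
both color classes. -/
theorem atMostOne_twoSided_orbit
    {V : Type*} [Fintype V] [DecidableEq V] (G : SimpleGraph V)
    (hconn : G.Connected) (R B : Set V)
    (hcover : ∀ v, v ∈ R ∨ v ∈ B) (hdisjRB : Disjoint R B)
    (hbip : ∀ u v, G.Adj u v → (u ∈ R ∧ v ∈ B) ∨ (u ∈ B ∧ v ∈ R))
    (Γ : Subgroup (Equiv.Perm V))
    (hΓ : ∀ γ ∈ Γ, ∀ u v, G.Adj (γ u) (γ v) ↔ G.Adj u v)
    (k : ℕ) (ℓ : ℕ → V) (hdist : ∀ i < k, ∀ j < k, ℓ i = ℓ j → i = j) :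
    ∀ i < k, ∀ j < k,
      (sstOrbit (↑Γ : Set (Equiv.Perm V)) ℓ i ∩ R).Nonempty →
      (sstOrbit (↑Γ : Set (Equiv.Perm V)) ℓ i ∩ B).Nonempty →
      (sstOrbit (↑Γ : Set (Equiv.Perm V)) ℓ j ∩ R).Nonempty →
      (sstOrbit (↑Γ : Set (Equiv.Perm V)) ℓ j ∩ B).Nonempty →
      i = j := by
  intro i _ j _ h1 h2 h3 h4
  rw [sstAux_zero G hconn R B hdisjRB hbip Γ hΓ ℓ i h1 h2,
    sstAux_zero G hconn R B hdisjRB hbip Γ hΓ ℓ j h3 h4]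
end

section
/- Let G = (V,E) be a finite simple graph, Γ a group of automorphisms of G, L = (ℓ_1,…,ℓ_k) a sequence of distinct leaders with stabilizer-chain orbits O_i, and S = S(L) the SST cuts. For every leader ℓ = ℓ_i, every follower f ∈ O_i \ {ℓ}, and every induced path P in G from ℓ to f with an even number |V(P)| of nodes, the SST path cut −x_ℓ + Σ_{v∈V(P)} x_v ≤ |V(P)|/2 − 1 is valid for P(G,S), i.e., it is satisfied by every x ∈ P(G,S). -/
open Finset

theorem pair_sum_le (y : ℕ → ℝ) (m : ℕ) (h : ∀ j < m, y (2 * j) + y (2 * j + 1) ≤ 1) :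
    ∑ s ∈ Finset.range (2 * m), y s ≤ (m : ℝ) := by
  induction m with
  | zero => simp
  | succ m ih =>
    have h1 := ih (fun j hj => h j (by omega))
    have h2 := h m (by omega)
    rw [show 2 * (m + 1) = 2 * m + 1 + 1 by ring, Finset.sum_range_succ, Finset.sum_range_succ]
    push_cast
    linarith

/-- SST path cuts are valid for `P(G,S)`: for a leader `ℓ i`, a follower `f` in its
orbit, and an even induced path `u_0, …, u_{p-1}` from `ℓ i` to `f`, every point of
`P(G,S)` satisfies `-x_{ℓ i} + ∑_{v ∈ P} x_v ≤ p/2 - 1`. -/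
theorem sstPathCut_valid
    {V : Type*} [Fintype V] [DecidableEq V] (G : SimpleGraph V)
    (Γ : Subgroup (Equiv.Perm V))
    (hΓ : ∀ γ ∈ Γ, ∀ u v, G.Adj (γ u) (γ v) ↔ G.Adj u v)
    (k : ℕ) (ℓ : ℕ → V) (hdist : ∀ i < k, ∀ j < k, ℓ i = ℓ j → i = j)
    (i : ℕ) (hi : i < k)
    (f : V) (hf : f ∈ sstOrbit (↑Γ : Set (Equiv.Perm V)) ℓ i) (hfl : f ≠ ℓ i)
    (p : ℕ) (u : ℕ → V)
    (hinj : ∀ s < p, ∀ t < p, u s = u t → s = t)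
    (hadj : ∀ s, s + 1 < p → G.Adj (u s) (u (s + 1)))
    (hind : ∀ s t, s < p → t < p → s + 2 ≤ t → ¬ G.Adj (u s) (u t))
    (hstart : u 0 = ℓ i) (hend : u (p - 1) = f) (heven : Even p) :
    ∀ x ∈ sstPolytope G (sstCuts (↑Γ : Set (Equiv.Perm V)) ℓ k),
      -x (ℓ i) + ∑ s ∈ Finset.range p, x (u s) ≤ (p : ℝ) / 2 - 1 := by
  have hp : ∃ m, p = 2 * m + 2 := by
    obtain ⟨r, hr⟩ := heven
    rcases Nat.eq_zero_or_pos r with h0 | h0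
    · exfalso
      apply hfl
      rw [← hend, ← hstart, hr, h0]
    · exact ⟨r - 1, by omega⟩
  obtain ⟨m, rfl⟩ := hp
  have hend' : u (2 * m + 1) = f := hend
  intro x hx
  have hconv : Convex ℝ {x : V → ℝ |
      -x (ℓ i) + ∑ s ∈ Finset.range (2 * m + 2), x (u s) ≤ ((2 * m + 2 : ℕ) : ℝ) / 2 - 1} := by
    apply convex_halfSpace_le (f := fun x : V → ℝ =>
      -x (ℓ i) + ∑ s ∈ Finset.range (2 * m + 2), x (u s))
    constructor
    · intro a b
      simp only [Pi.add_apply, Finset.sum_add_distrib]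
      ring
    · intro c a
      simp only [Pi.smul_apply, smul_eq_mul, ← Finset.mul_sum]
      ring
  refine convexHull_min ?_ hconv hx
  rintro y ⟨I, hI, rfl, hcut⟩
  show -indic I (ℓ i) + ∑ s ∈ Finset.range (2 * m + 2), indic I (u s)
    ≤ ((2 * m + 2 : ℕ) : ℝ) / 2 - 1
  have hedge : ∀ a b, G.Adj a b → indic I a + indic I b ≤ 1 := by
    intro a b hab
    unfold indic
    split_ifs with h1 h2 <;> first | exact absurd hab (hI a h1 b h2) | norm_num
  have hnn : ∀ a, 0 ≤ indic I a := by
    intro a; unfold indic; split_ifs <;> norm_num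
  have hfcut : indic I f ≤ indic I (ℓ i) := hcut (ℓ i, f) ⟨i, hi, rfl, hf, hfl⟩
  have h01 : indic I (ℓ i) = 0 ∨ indic I (ℓ i) = 1 := by
    unfold indic; split_ifs <;> simp
  push_cast
  rcases h01 with h0 | h1
  · have hs := pair_sum_le (fun s => indic I (u (s + 1))) m
      (fun j hj => hedge _ _ (hadj _ (by omega)))
    rw [Finset.sum_range_succ, Finset.sum_range_succ', hend', hstart]
    linarith
  · have hs := pair_sum_le (fun s => indic I (u (s + 1 + 1))) m
      (fun j hj => hedge _ _ (hadj _ (by omega)))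
    have he := hedge _ _ (hadj 0 (by omega))
    rw [Finset.sum_range_succ', Finset.sum_range_succ']
    simp only [zero_add] at he ⊢
    rw [hstart] at he ⊢
    linarith
end

section
/- Let G = (V,E) be a trivially perfect finite simple graph with node weights c ∈ ℤ^V, and let Γ_G be the group of all automorphisms of G that preserve c. Then for every v ∈ V, each connected component of the subgraph of G induced by the orbit {γ(v) : γ ∈ Γ_G} is a clique of G. -/
/-- The orbit of a node under the full weight-preserving automorphism group. -/
def nodeOrbit {V : Type*} (G : SimpleGraph V) (c : V → ℤ) (v : V) : Set V :=
  {w | ∃ γ ∈ autSet G c, γ v = w}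

def clN {V : Type*} (G : SimpleGraph V) (x : V) : Set V := {y | y = x ∨ G.Adj x y}

lemma clN_card {V : Type*} (G : SimpleGraph V) (c : V → ℤ) (v w : V)
    (hw : w ∈ nodeOrbit G c v) : (clN G w).ncard = (clN G v).ncard := by
  obtain ⟨γ, ⟨h1, -⟩, rfl⟩ := hw
  have : clN G (γ v) = γ '' clN G v := by
    ext y
    obtain ⟨z, rfl⟩ := γ.surjective y
    simp [clN, h1]
  rw [this, Set.ncard_image_of_injective _ γ.injective]

lemma clN_eq {V : Type*} [Fintype V] (G : SimpleGraph V)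
    (hTP : TriviallyPerfect G) (u w : V) (h : G.Adj u w)
    (hc : (clN G u).ncard = (clN G w).ncard) : clN G u = clN G w := by
  obtain ⟨I, hI, -, hadj, hlam⟩ := hTP
  have key : ∀ x y, y ∈ clN G x ↔ (I x ∩ I y).Nonempty := by
    intro x y
    by_cases hxy : y = x
    · subst hxy
      obtain ⟨a, b, hab, he⟩ := hI y
      simp [clN, he, hab]
    · simp [clN, hxy, hadj x y (Ne.symm hxy)]
  have mono : ∀ x y, I x ⊆ I y → clN G x ⊆ clN G y := by
    intro x y hs z hz
    rw [key] at hz ⊢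
    exact hz.mono (Set.inter_subset_inter_left _ hs)
  rcases hlam u w ((hadj u w h.ne).1 h) with hs | hs
  · exact Set.eq_of_subset_of_ncard_le (mono _ _ hs) hc.ge (Set.toFinite _)
  · exact (Set.eq_of_subset_of_ncard_le (mono _ _ hs) hc.le (Set.toFinite _)).symm

/-- In a trivially perfect graph, each connected component of the subgraph induced by a
node orbit of the weight-preserving automorphism group is a clique: any two distinct
orbit members that are reachable within the induced subgraph are adjacent. -/
theorem orbit_component_is_clique
    {V : Type*} [Fintype V] [DecidableEq V] (G : SimpleGraph V)
    (hTP : TriviallyPerfect G) (c : V → ℤ) (v : V) :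
    ∀ (u : V) (hu : u ∈ nodeOrbit G c v) (w : V) (hw : w ∈ nodeOrbit G c v),
      (G.induce (nodeOrbit G c v)).Reachable ⟨u, hu⟩ ⟨w, hw⟩ → u ≠ w → G.Adj u w := by
  intro u hu w hw hr hne
  have key : ∀ a b : nodeOrbit G c v, (G.induce (nodeOrbit G c v)).Reachable a b →
      clN G a.1 = clN G b.1 := by
    rintro a b ⟨p⟩
    induction p with
    | nil => rfl
    | @cons a b d h p ih =>
      rw [← ih]
      exact clN_eq G hTP _ _ h ((clN_card G c v _ a.2).trans (clN_card G c v _ b.2).symm)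
  have h := key _ _ hr
  have h2 : w ∈ clN G u := by
    rw [h]
    exact Or.inl rfl
  rcases h2 with h2 | h2
  · exact absurd h2.symm hne
  · exact h2
end
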